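/- arXiv:1711.09399 — 2 statements merged into one kernel-verified Lean document; each statement's English description precedes it below -/
import Mathlib

section
/- Let a₁, a₂, a₃ be nonzero integers and b₁, b₂, b₃ integers with gcd(a_j, b_j) = 1 for j = 1,2,3. Let P be the group with presentation ⟨x₁, x₂, x₃, h | x_j h x_j^{−1} h^{−1} (j=1,2,3), x_j^{a_j} h^{b_j} (j=1,2,3), x₁x₂x₃⟩. Let p be a prime, m ≥ 1, n a positive integer dividing p − 1, r ∈ (ℤ/p^mℤ)^× of multiplicative order exactly n, and G = ℤ/p^mℤ ⋊_r ℤ/nℤ. Define (indices j taken mod 3): f ≥ 0 by p^f = gcd(lcm(a₁,a₂,a₃), p^m); integers c_j with c_j·a_j ≡ gcd(a_j, p^m) (mod p^m); B = Σ_{j=1}^{3} b_j·c_j·p^f/gcd(a_j, p^m); D' = gcd(lcm(a₁,a₂,a₃), n); integers c'_j with c'_j·a_j ≡ gcd(a_j, n) (mod n); B' = Σ_{j=1}^{3} b_j·c'_j·D'/gcd(a_j, n); E = n / lcm(D', n/gcd(n, B')); κ₂ = 2 − Σ_{j=1}^{3} gcd(a_{j+1}, a_{j−1}, n) + (1/D')·Π_{j=1}^{3}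 gcd(a_j, n); κ₁ = Σ_{j=1}^{3} gcd(a_j, p^m)·(gcd(a_{j+1}, a_{j−1}, n) − 1) + ((E−1)/D')·Π_{j=1}^{3} gcd(a_j, n); and μ = Σ_{j=1}^{3} ‖a_j‖_p − f + min{m − f, ‖B‖_p} if f < m, while μ = Σ_{j=1}^{3} min{‖a_j‖_p, m} − m if f = m. Then the number of group homomorphisms from P to G equals κ₂·p^{2m} + κ₁·p^m + p^μ. -/
open Multiplicative

/-- The standard presentation `⟨x₁, x₂, x₃, h | x_j h x_j⁻¹ h⁻¹, x_j^{a_j} h^{b_j} (j = 1,2,3),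
x₁x₂x₃⟩` of the fundamental group of the small Seifert fibred space
`S²(a₁/b₁, a₂/b₂, a₃/b₃)`.  The generator `x_j` is `FreeGroup.of j` for `j = 0,1,2` and
`h` is `FreeGroup.of 3`. -/
def seifertRels (a b : Fin 3 → ℤ) : Set (FreeGroup (Fin 4)) :=
  (⋃ j : Fin 3,
      {FreeGroup.of j.castSucc * FreeGroup.of 3 * (FreeGroup.of j.castSucc)⁻¹ *
        (FreeGroup.of 3)⁻¹})
    ∪ (⋃ j : Fin 3, {FreeGroup.of j.castSucc ^ a j * FreeGroup.of 3 ^ b j})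
    ∪ {FreeGroup.of 0 * FreeGroup.of 1 * FreeGroup.of 2}

lemma card_ann (k : ℕ) [NeZero k] (a : ℤ) :
    Nat.card {z : ZMod k // (a : ZMod k) * z = 0} = Int.gcd a k := by
  have h := IsAddCyclic.card_nsmulAddMonoidHom_ker (G := ZMod k) a.natAbs
  rw [Nat.card_zmod, Nat.gcd_comm] at h
  rw [show Int.gcd a k = Nat.gcd a.natAbs k from rfl, ← h]
  refine Nat.card_congr (Equiv.subtypeEquivRight fun z => ?_)
  rw [AddMonoidHom.mem_ker]
  simp only [nsmulAddMonoidHom_apply, nsmul_eq_mul]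
  rcases Int.natAbs_eq a with h | h
  · conv_lhs => rw [h]
    simp
  · conv_lhs => rw [h]
    simp

lemma fib {A C : Type*} [AddCommGroup A] [AddCommGroup C] [Finite A] (H : AddSubgroup A)
    (f : A →+ C) : Nat.card H = Nat.card {x : A // x ∈ H ∧ f x = 0} *
      Nat.card {y // ∃ x ∈ H, f x = y} := by
  have h := AddSubgroup.card_eq_card_quotient_mul_card_addSubgroup (f.comp H.subtype).ker
  rw [h, Nat.card_congr (QuotientAddGroup.quotientKerEquivRange (f.comp H.subtype)).toEquiv,
    mul_comm]
  congr 1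
  · refine Nat.card_congr ⟨fun x => ⟨x.1.1, x.1.2, x.2⟩, fun x => ⟨⟨x.1, x.2.1⟩, x.2.2⟩,
      fun x => rfl, fun x => rfl⟩
  · refine Nat.card_congr (Equiv.subtypeEquivRight fun y => ?_)
    simp [AddMonoidHom.mem_range]

lemma split_two {A : Type*} [AddCommGroup A] (x y : ℤ) (hx : x ≠ 0) (z : A)
    (h : ((Int.lcm x y : ℕ) : ℤ) • z = 0) :
    ∃ z1 z2 : A, z = z1 + z2 ∧ x • z1 = 0 ∧ y • z2 = 0 := by
  have hg : ((Int.gcd x y : ℕ) : ℤ) ≠ 0 := by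
    simp [Int.gcd_eq_zero_iff, hx]
  obtain ⟨x', hx'⟩ := Int.gcd_dvd_left x y
  obtain ⟨y', hy'⟩ := Int.gcd_dvd_right x y
  have hb := Int.gcd_eq_gcd_ab x y
  have h1 : x' * Int.gcdA x y + y' * Int.gcdB x y = 1 := by
    apply mul_left_cancel₀ hg
    linear_combination -hb - Int.gcdA x y * hx' - Int.gcdB x y * hy'
  have hl : ((Int.lcm x y : ℕ) : ℤ) ∣ x * y' := by
    apply Int.coe_lcm_dvd
    · exact dvd_mul_right _ _
    · exact ⟨x', by linear_combination y' * hx' - x' * hy'⟩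
  have hz : (x * y') • z = 0 := by
    obtain ⟨q, hq⟩ := hl
    rw [hq, mul_comm, mul_smul, h, smul_zero]
  refine ⟨(y' * Int.gcdB x y) • z, (x' * Int.gcdA x y) • z, ?_, ?_, ?_⟩
  · rw [← add_smul, add_comm, h1, one_smul]
  · rw [← mul_smul, show x * (y' * Int.gcdB x y) = Int.gcdB x y * (x * y') by ring, mul_smul, hz,
      smul_zero]
  · rw [← mul_smul, show y * (x' * Int.gcdA x y) = Int.gcdA x y * (x * y') by
      linear_combination Int.gcdA x y * (x' * hy' - y' * hx'), mul_smul, hz, smul_zero]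

lemma gcd_lcm_dvd (x y k t : ℤ) (hx : x ≠ 0) (h1 : (Int.gcd x k : ℤ) ∣ t)
    (h2 : (Int.gcd y k : ℤ) ∣ t) : (Int.gcd (Int.lcm x y : ℤ) k : ℤ) ∣ t := by
  have hg : ((Int.gcd x y : ℕ) : ℤ) ≠ 0 := by
    simp [Int.gcd_eq_zero_iff, hx]
  obtain ⟨x', hx'⟩ := Int.gcd_dvd_left x y
  obtain ⟨y', hy'⟩ := Int.gcd_dvd_right x y
  have hb := Int.gcd_eq_gcd_ab x y
  have hh : x' * Int.gcdA x y + y' * Int.gcdB x y = 1 := by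
    apply mul_left_cancel₀ hg
    linear_combination -hb - Int.gcdA x y * hx' - Int.gcdB x y * hy'
  have hl : ((Int.lcm x y : ℕ) : ℤ) ∣ x * y' := by
    apply Int.coe_lcm_dvd
    · exact dvd_mul_right _ _
    · exact ⟨x', by linear_combination y' * hx' - x' * hy'⟩
  obtain ⟨u, hu⟩ := h1
  obtain ⟨v, hv⟩ := h2
  rw [Int.gcd_eq_gcd_ab] at hu hv
  have h3 : (Int.gcd (Int.lcm x y : ℤ) k : ℤ) ∣ x * y' := (Int.gcd_dvd_left _ _).trans hl
  have h4 : (Int.gcd (Int.lcm x y : ℤ) k : ℤ) ∣ k := Int.gcd_dvd_right _ _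
  have h5 : t = x * y' * (Int.gcdA x y * x.gcdA k * 0 + Int.gcdA x y * y.gcdA k * v
      + Int.gcdB x y * x.gcdA k * u)
      + k * (x' * Int.gcdA x y * y.gcdB k * v + y' * Int.gcdB x y * x.gcdB k * u) := by
    have h6 : x * y' = y * x' := by linear_combination y' * hx' - x' * hy'
    linear_combination (-t) * hh + x' * Int.gcdA x y * hv + y' * Int.gcdB x y * hu
      - Int.gcdA x y * y.gcdA k * v * h6
  rw [h5]
  exact dvd_add (h3.mul_right _) (h4.mul_right _)

/-- the total lcm -/
def LL (a : Fin 3 → ℤ) : ℕ := Int.lcm (a 0) (Int.lcm (a 1) (a 2))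

lemma dvd_LL (a : Fin 3 → ℤ) (j : Fin 3) : a j ∣ (LL a : ℤ) := by
  unfold LL
  have h1 := Int.dvd_lcm_left (a 0) (Int.lcm (a 1) (a 2))
  have h2 := Int.dvd_lcm_right (a 0) (Int.lcm (a 1) (a 2))
  fin_cases j
  · exact h1
  · exact (Int.dvd_lcm_left (a 1) (a 2)).trans h2
  · exact (Int.dvd_lcm_right (a 1) (a 2)).trans h2

lemma LL_dvd (a : Fin 3 → ℤ) (x : ℤ) (h : ∀ j, a j ∣ x) : (LL a : ℤ) ∣ x :=
  Int.coe_lcm_dvd (h 0) (Int.coe_lcm_dvd (h 1) (h 2))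

lemma split_three (k : ℕ) (a : Fin 3 → ℤ) (ha : ∀ j, a j ≠ 0) (z : ZMod k)
    (h : (LL a : ZMod k) * z = 0) :
    ∃ s : Fin 3 → ZMod k, s 0 + s 1 + s 2 = z ∧ ∀ j, (a j : ZMod k) * s j = 0 := by
  obtain ⟨z0, w, hz, h0, hw⟩ := split_two (a 0) (Int.lcm (a 1) (a 2)) (ha 0) z (by
    simpa [LL] using h)
  obtain ⟨z1, z2, hz', h1, h2⟩ := split_two (a 1) (a 2) (ha 1) w hw
  refine ⟨![z0, z1, z2], by simp [hz, hz', add_assoc], ?_⟩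
  intro j
  rw [zsmul_eq_mul] at h0 h1 h2
  fin_cases j
  · exact h0
  · exact h1
  · exact h2

lemma gcd_mul_eq_zero_iff (k : ℕ) (x : ℤ) (z : ZMod k) :
    ((Int.gcd x k : ℕ) : ZMod k) * z = 0 ↔ (x : ZMod k) * z = 0 := by
  constructor
  · intro h
    obtain ⟨q, hq⟩ := Int.gcd_dvd_left x k
    have : (x : ZMod k) = ((Int.gcd x k : ℕ) : ZMod k) * (q : ZMod k) := by
      conv_lhs => rw [hq]
      push_cast; rfl
    rw [this, mul_right_comm, h, zero_mul]
  · intro h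
    have hb := congrArg (Int.cast : ℤ → ZMod k) (Int.gcd_eq_gcd_ab x k)
    push_cast at hb
    rw [hb]
    simp only [CharP.cast_eq_zero, zero_mul, add_zero]
    rw [mul_right_comm, h, zero_mul]

/-- solutions with h trivial -/
def S0 (k : ℕ) (a : Fin 3 → ℤ) (s : Fin 3 → ZMod k) : Prop :=
  (∀ j, (a j : ZMod k) * s j = 0) ∧ s 0 + s 1 + s 2 = 0

/-- all abelian solutions -/
def SS (k : ℕ) (a b : Fin 3 → ℤ) (s : Fin 3 → ZMod k) (t : ZMod k) : Prop :=
  (∀ j, (a j : ZMod k) * s j + (b j : ZMod k) * t = 0) ∧ s 0 + s 1 + s 2 = 0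

lemma card_S0 (k : ℕ) [NeZero k] (a : Fin 3 → ℤ) (ha : ∀ j, a j ≠ 0) :
    Nat.card {s // S0 k a s} * Nat.gcd (LL a) k = ∏ j, Int.gcd (a j) k := by
  let H : AddSubgroup (Fin 3 → ZMod k) :=
    { carrier := {s | ∀ j, (a j : ZMod k) * s j = 0}
      zero_mem' := by intro j; simp
      add_mem' := by
        intro x y hx hy j
        simp [mul_add, hx j, hy j]
      neg_mem' := by
        intro x hx j
        simp [hx j] }
  let f : (Fin 3 → ZMod k) →+ ZMod k :=
    { toFun := fun s => s 0 + s 1 + s 2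
      map_zero' := by simp
      map_add' := by intro x y; simp; ring }
  have h := fib H f
  have h1 : Nat.card H = ∏ j, Int.gcd (a j) k := by
    rw [← Finset.prod_congr rfl fun j _ => card_ann k (a j), ← Nat.card_pi]
    exact Nat.card_congr ⟨fun x j => ⟨x.1 j, x.2 j⟩, fun x => ⟨fun j => (x j).1, fun j => (x j).2⟩,
      fun x => rfl, fun x => rfl⟩
  have h2 : Nat.card {y // ∃ x ∈ H, f x = y} = Nat.gcd (LL a) k := by
    have := card_ann k (LL a)
    rw [Int.gcd_natCast_natCast] at this
    rw [← this]
    refine Nat.card_congr (Equiv.subtypeEquivRight fun y => ?_)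
    constructor
    · rintro ⟨x, hx, rfl⟩
      have hh : ∀ j, ((LL a : ℤ) : ZMod k) * x j = 0 := by
        intro j
        obtain ⟨q, hq⟩ := dvd_LL a j
        rw [hq]; push_cast
        rw [mul_right_comm, hx j, zero_mul]
      change _ * (x 0 + x 1 + x 2) = 0
      rw [mul_add, mul_add, hh, hh, hh]; simp
    · intro hy
      obtain ⟨s, hs, hs'⟩ := split_three k a ha y (by simpa using hy)
      exact ⟨s, hs', hs⟩
  rw [← h1, h, h2]
  rfl

lemma card_SS (k : ℕ) [NeZero k] (a b : Fin 3 → ℤ) (ha : ∀ j, a j ≠ 0)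
    (hab : ∀ j, Int.gcd (a j) (b j) = 1) (c : Fin 3 → ℤ)
    (hc : ∀ j, c j * a j ≡ (Int.gcd (a j) (k : ℤ) : ℤ) [ZMOD (k : ℤ)])
    (D : ℕ) (hD : D = Nat.gcd (LL a) k)
    (B : ℤ) (hB : B = ∑ j : Fin 3, b j * c j * ((D / Int.gcd (a j) (k : ℤ) : ℕ) : ℤ)) :
    Nat.card {q : (Fin 3 → ZMod k) × ZMod k // SS k a b q.1 q.2} =
      Nat.card {s // S0 k a s} * Int.gcd B (k / D : ℕ) := by
  have hk : 0 < k := Nat.pos_of_ne_zero (NeZero.ne k)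
  have hDpos : 0 < D := hD ▸ Nat.gcd_pos_of_pos_right _ hk
  have hDk : D ∣ k := hD ▸ Nat.gcd_dvd_right _ _
  have hDz : ∀ z : ZMod k, (D : ZMod k) * z = 0 ↔ (LL a : ZMod k) * z = 0 := by
    intro z
    have := gcd_mul_eq_zero_iff k (LL a) z
    rw [Int.gcd_natCast_natCast, ← hD] at this
    simpa using this
  have hgD : ∀ j, Int.gcd (a j) k ∣ D := by
    intro j
    rw [hD]
    apply Nat.dvd_gcd
    · exact Int.natCast_dvd_natCast.mp ((Int.gcd_dvd_left _ _).trans (dvd_LL a j))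
    · exact Int.natCast_dvd_natCast.mp (Int.gcd_dvd_right _ _)
  have hca : ∀ j, (c j : ZMod k) * (a j : ZMod k) = ((Int.gcd (a j) k : ℕ) : ZMod k) := by
    intro j
    have := (ZMod.intCast_eq_intCast_iff _ _ k).mpr (hc j)
    push_cast at this
    exact this
  let e : Fin 3 → ZMod k := fun j => (b j : ZMod k) * c j * ((D / Int.gcd (a j) (k : ℤ) : ℕ) : ZMod k)
  have he : ∀ j, (a j : ZMod k) * e j = b j * D := by
    intro j
    have h1 : ((Int.gcd (a j) k : ℕ) : ZMod k) * ((D / Int.gcd (a j) (k : ℤ) : ℕ) : ZMod k) = D := by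
      rw [← Nat.cast_mul, Nat.mul_div_cancel' (hgD j)]
    simp only [e]
    rw [← h1, ← hca j]; ring
  have heB : e 0 + e 1 + e 2 = (B : ZMod k) := by
    rw [hB, Fin.sum_univ_three]; simp only [Int.cast_add, Int.cast_mul, Int.cast_natCast, e]
  let H : AddSubgroup ((Fin 3 → ZMod k) × ZMod k) :=
    { carrier := {q | SS k a b q.1 q.2}
      zero_mem' := by simp [SS]
      add_mem' := by
        rintro x y ⟨hx, hx'⟩ ⟨hy, hy'⟩
        refine ⟨fun j => ?_, ?_⟩
        · have := congrArg₂ (· + ·) (hx j) (hy j)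
          simp at this ⊢
          linear_combination this
        · have := congrArg₂ (· + ·) hx' hy'
          simp at this ⊢
          linear_combination this
      neg_mem' := by
        rintro x ⟨hx, hx'⟩
        refine ⟨fun j => ?_, ?_⟩
        · have := hx j
          simp at this ⊢
          linear_combination -this
        · simp at hx' ⊢
          linear_combination -hx' }
  have h1 := fib H (AddMonoidHom.snd _ _)
  have hker : Nat.card {x : (Fin 3 → ZMod k) × ZMod k // x ∈ H ∧ (AddMonoidHom.snd _ _) x = 0} =
      Nat.card {s // S0 k a s} := by
    refine Nat.card_congr ⟨fun x => ⟨x.1.1, ?_⟩, fun x => ⟨(x.1, 0), ?_, rfl⟩, ?_, fun x => rfl⟩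
    · obtain ⟨⟨s, t⟩, ⟨hx, hx'⟩, ht⟩ := x
      simp at ht
      subst ht
      exact ⟨by simpa using hx, hx'⟩
    · exact ⟨by simpa using x.2.1, x.2.2⟩
    · rintro ⟨⟨s, t⟩, ⟨hx, hx'⟩, ht⟩
      simp at ht
      subst ht
      rfl
  let H2 : AddSubgroup (ZMod k) :=
    { carrier := {z | ((D * B : ℤ) : ZMod k) * z = 0}
      zero_mem' := by simp
      add_mem' := by
        rintro x y hx hy
        simp only [Set.mem_ofPred_eq] at hx hy ⊢
        rw [mul_add, hx, hy, add_zero]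
      neg_mem' := by
        rintro x hx
        simp only [Set.mem_ofPred_eq] at hx ⊢
        rw [mul_neg, hx, neg_zero] }
  have h2 := fib H2 (AddMonoidHom.mulLeft (D : ZMod k))
  have hcH2 : Nat.card H2 = Int.gcd (D * B) k := card_ann k (D * B)
  have hker2 : Nat.card {x : ZMod k // x ∈ H2 ∧ (AddMonoidHom.mulLeft (D : ZMod k)) x = 0} = D := by
    have := card_ann k D
    rw [Int.gcd_natCast_natCast, Nat.gcd_eq_left hDk] at this
    conv_rhs => rw [← this]
    refine Nat.card_congr (Equiv.subtypeEquivRight fun y => ?_)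
    simp only [AddMonoidHom.coe_mulLeft, Int.cast_natCast]
    refine ⟨fun h => h.2, fun h => ⟨?_, h⟩⟩
    change ((D * B : ℤ) : ZMod k) * y = 0
    push_cast
    rw [mul_right_comm, h, zero_mul]
  have himg : Nat.card {y // ∃ x ∈ H, (AddMonoidHom.snd (Fin 3 → ZMod k) (ZMod k)) x = y} =
      Nat.card {y // ∃ x ∈ H2, (AddMonoidHom.mulLeft (D : ZMod k)) x = y} := by
    refine Nat.card_congr (Equiv.subtypeEquivRight fun t => ?_)
    constructor
    · rintro ⟨⟨s, t'⟩, ⟨hs, hs'⟩, rfl⟩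
      simp only [AddMonoidHom.coe_snd] at *
      obtain ⟨t0, rfl⟩ : ∃ t0 : ℤ, (t0 : ZMod k) = t' := ZMod.intCast_surjective t'
      have hg : ∀ j, ((Int.gcd (a j) k : ℕ) : ℤ) ∣ t0 := by
        intro j
        have hb := Int.gcd_eq_gcd_ab (a j) (b j)
        rw [hab j] at hb
        obtain ⟨s0, hs0⟩ := ZMod.intCast_surjective (s j)
        have := hs j
        rw [← hs0] at this
        have h3 : (k : ℤ) ∣ a j * s0 + b j * t0 := by
          rw [← ZMod.intCast_zmod_eq_zero_iff_dvd]
          push_cast; exact this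
        have h4 := (Int.gcd_dvd_right (a j) (k : ℤ)).trans h3
        have h5 := Int.gcd_dvd_left (a j) (k : ℤ)
        have h6 : t0 = a j * (Int.gcdA (a j) (b j) * t0 - Int.gcdB (a j) (b j) * s0)
          + (a j * s0 + b j * t0) * Int.gcdB (a j) (b j) := by
          push_cast at hb
          linear_combination t0 * hb
        rw [h6]
        exact dvd_add (h5.mul_right _) (h4.mul_right _)
      have hDt : (D : ℤ) ∣ t0 := by
        have h7 := gcd_lcm_dvd (a 0) (Int.lcm (a 1) (a 2)) k t0 (ha 0) (hg 0)
          (gcd_lcm_dvd (a 1) (a 2) k t0 (ha 1) (hg 1) (hg 2))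
        rw [Int.gcd_natCast_natCast] at h7
        rw [hD]
        exact h7
      obtain ⟨t1, rfl⟩ := hDt
      push_cast at *
      refine ⟨(t1 : ZMod k), ?_, rfl⟩
      change ((D * B : ℤ) : ZMod k) * t1 = 0
      have hz : ∀ j, (a j : ZMod k) * (s j + e j * t1) = 0 := by
        intro j
        linear_combination hs j + t1 * he j
      have hL : ∀ j, (D : ZMod k) * (s j + e j * t1) = 0 := by
        intro j
        rw [hDz]
        obtain ⟨q, hq⟩ := dvd_LL a j
        have := congrArg (Int.cast : ℤ → ZMod k) hq
        push_cast at this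
        rw [this, mul_right_comm, hz j, zero_mul]
      push_cast
      rw [← heB]
      linear_combination hL 0 + hL 1 + hL 2 - D * hs'
    · rintro ⟨t1, ht1, rfl⟩
      change ((D * B : ℤ) : ZMod k) * t1 = 0 at ht1
      push_cast at ht1
      rw [mul_assoc, hDz] at ht1
      obtain ⟨z, hz, hz'⟩ := split_three k a ha _ ht1
      refine ⟨(fun j => z j - e j * t1, D * t1), ⟨?_, ?_⟩, rfl⟩
      · intro j
        simp only
        linear_combination hz' j - t1 * he j
      · simp only
        linear_combination hz - t1 * heB
  change Nat.card H = _
  rw [h1, hker, himg]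
  congr 1
  apply Nat.eq_of_mul_eq_mul_left hDpos
  rw [hcH2, hker2] at h2
  rw [← h2]
  conv_lhs => rw [← Nat.mul_div_cancel' hDk]
  push_cast
  rw [← Int.natCast_ediv, Int.gcd_mul_left]
  simp

lemma card_S0_zero (k : ℕ) [NeZero k] (a : Fin 3 → ℤ) (j : Fin 3) :
    Nat.card {s // S0 k a s ∧ s j = 0} =
      Nat.gcd (Int.gcd (a (j + 1)) (a (j - 1))) k := by
  have key : ∀ x y : ℤ, Nat.card {z : ZMod k // (x : ZMod k) * z = 0 ∧ (y : ZMod k) * z = 0} =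
      Nat.gcd (Int.gcd x y) k := by
    intro x y
    have := card_ann k (Int.gcd x y)
    rw [Int.gcd_natCast_natCast] at this
    rw [← this]
    refine Nat.card_congr (Equiv.subtypeEquivRight fun z => ?_)
    constructor
    · rintro ⟨h1, h2⟩
      rw [Int.gcd_eq_gcd_ab]
      push_cast
      linear_combination (x.gcdA y : ZMod k) * h1 + (x.gcdB y : ZMod k) * h2
    · intro h
      constructor
      · obtain ⟨q, hq⟩ := Int.gcd_dvd_left x y
        have := congrArg (Int.cast : ℤ → ZMod k) hq
        rw [this, Int.cast_mul, mul_right_comm, h, zero_mul]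
      · obtain ⟨q, hq⟩ := Int.gcd_dvd_right x y
        have := congrArg (Int.cast : ℤ → ZMod k) hq
        rw [this, Int.cast_mul, mul_right_comm, h, zero_mul]
  rw [← key]
  refine Nat.card_congr (Equiv.ofBijective (fun s => ⟨s.1 (j + 1), s.2.1.1 _, ?_⟩) ⟨?_, ?_⟩)
  · obtain ⟨s, ⟨h1, h2⟩, h3⟩ := s
    have : s (j + 1) = - s (j - 1) := by
      fin_cases j
      · change s 1 = - s 2
        change s 0 = 0 at h3
        linear_combination h2 - h3
      · change s 2 = - s 0
        change s 1 = 0 at h3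
        linear_combination h2 - h3
      · change s 0 = - s 1
        change s 2 = 0 at h3
        linear_combination h2 - h3
    simp only [this]
    rw [mul_neg, h1, neg_zero]
  · rintro ⟨s, ⟨h1, h2⟩, h3⟩ ⟨s', ⟨h1', h2'⟩, h3'⟩ h
    simp only [Subtype.mk.injEq] at h ⊢
    funext i
    fin_cases j <;> fin_cases i <;> simp at h h3 h3' ⊢ <;>
      first
        | linear_combination h
        | linear_combination h3 - h3'
        | linear_combination h2 - h2' - h3 + h3' - h
  · rintro ⟨z, h1, h2⟩
    have h2' : (a (j - 1) : ZMod k) * (- z) = 0 := by rw [mul_neg, h2, neg_zero]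
    fin_cases j
    · refine ⟨⟨![0, z, -z], ⟨?_, by simp⟩, by simp⟩, rfl⟩
      intro i; fin_cases i
      · simp
      · exact h1
      · exact h2'
    · refine ⟨⟨![-z, 0, z], ⟨?_, by simp⟩, by simp⟩, rfl⟩
      intro i; fin_cases i
      · exact h2'
      · simp
      · exact h1
    · refine ⟨⟨![z, -z, 0], ⟨?_, by simp⟩, by simp⟩, rfl⟩
      intro i; fin_cases i
      · exact h1
      · exact h2'
      · simp

lemma card_lin3 {R : Type*} [CommRing R] (P : R → Prop) (e e' e'' : R)
    (h : IsUnit e'') :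
    Nat.card {q : R × R × R // P q.1 ∧ e * q.1 + e' * q.2.1 + e'' * q.2.2 = 0} =
      Nat.card {x // P x} * Nat.card R := by
  rw [← Nat.card_prod]
  obtain ⟨i, hi⟩ := h.exists_right_inv
  refine Nat.card_congr ⟨fun q => (⟨q.1.1, q.2.1⟩, q.1.2.1),
    fun q => ⟨(q.1.1, q.2, - i * (e * q.1.1 + e' * q.2)), q.1.2, ?_⟩, ?_, ?_⟩
  · simp only
    linear_combination (- (e * q.1.1 + e' * q.2)) * hi
  · rintro ⟨⟨x, y, z⟩, h1, h2⟩
    simp only [Subtype.mk.injEq, Prod.mk.injEq, true_and]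
    simp only at h2
    linear_combination -i * h2 + z * hi
  · rintro ⟨⟨x, y⟩, h1⟩
    rfl

lemma card_linFin {R : Type*} [CommRing R] (P : R → Prop) (e : Fin 3 → R)
    (h : ∀ j, IsUnit (e j)) (j : Fin 3) :
    Nat.card {u : Fin 3 → R // P (u j) ∧ e 0 * u 0 + e 1 * u 1 + e 2 * u 2 = 0} =
      Nat.card {x // P x} * Nat.card R := by
  rw [← card_lin3 P (e j) (e (j + 1)) (e (j + 2)) (h _)]
  refine Nat.card_congr (Equiv.ofBijective (fun u => ⟨(u.1 j, u.1 (j + 1), u.1 (j + 2)), u.2.1, ?_⟩)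
    ⟨?_, ?_⟩)
  · have := u.2.2
    fin_cases j <;> simp <;> linear_combination this
  · rintro ⟨u, hu⟩ ⟨u', hu'⟩ hh
    simp only [Subtype.mk.injEq, Prod.mk.injEq] at hh ⊢
    obtain ⟨h1, h2, h3⟩ := hh
    funext i
    fin_cases j <;> fin_cases i <;> simp at h1 h2 h3 ⊢ <;> assumption
  · rintro ⟨⟨x, y, z⟩, h1, h2⟩
    fin_cases j
    · refine ⟨⟨![x, y, z], h1, ?_⟩, rfl⟩
      simp at h2 ⊢; linear_combination h2
    · refine ⟨⟨![z, x, y], h1, ?_⟩, rfl⟩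
      simp at h2 ⊢; linear_combination h2
    · refine ⟨⟨![y, z, x], h1, ?_⟩, rfl⟩
      simp at h2 ⊢; linear_combination h2

/-- Coordinates on the semidirect product. -/
structure SD (N n : ℕ) (G : Type) [Group G] where
  el : ZMod N → ZMod n → G
  ρ : ZMod n → ZMod N
  mul : ∀ u s u' s', el u s * el u' s' = el (u + ρ s * u') (s + s')
  inj : ∀ u s u' s', el u s = el u' s' → u = u' ∧ s = s'
  surj : ∀ g, ∃ u s, el u s = g
  ρ0 : ρ 0 = 1
  ρadd : ∀ s t, ρ (s + t) = ρ s * ρ t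
  unit : ∀ s, s ≠ 0 → IsUnit (1 - ρ s)

namespace SD

variable {N n : ℕ} {G : Type} [Group G] (X : SD N n G)

lemma el_zero : X.el 0 0 = 1 := by
  have := X.mul 0 0 0 0
  simpa using this

lemma el_eq (u s u' s') : X.el u s = X.el u' s' ↔ u = u' ∧ s = s' :=
  ⟨X.inj _ _ _ _, fun h => by rw [h.1, h.2]⟩

lemma el_one (u s) : X.el u s = 1 ↔ u = 0 ∧ s = 0 := by
  rw [← X.el_zero, el_eq]

lemma ρ_unit (s) : IsUnit (X.ρ s) := by
  apply IsUnit.of_mul_eq_one (X.ρ (-s))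
  rw [← X.ρadd, add_neg_cancel, X.ρ0]

/-- conjugate of the complement -/
def wHom (w : ZMod N) : Multiplicative (ZMod n) →* G :=
  MonoidHom.mk' (fun s => X.el ((1 - X.ρ s.toAdd) * w) s.toAdd) (by
    intro s t
    rw [X.mul, X.el_eq]
    refine ⟨?_, rfl⟩
    rw [toAdd_mul, X.ρadd]; ring)

/-- the normal subgroup -/
def iHom : Multiplicative (ZMod N) →* G :=
  MonoidHom.mk' (fun u => X.el u.toAdd 0) (by
    intro s t
    rw [X.mul, X.el_eq]
    simp [X.ρ0])

lemma pow_w (w : ZMod N) (s : ZMod n) (a : ℤ) : X.el ((1 - X.ρ s) * w) s ^ a =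
    X.el ((1 - X.ρ (a * s)) * w) (a * s) := by
  have := (map_zpow (X.wHom w) (ofAdd s) a).symm
  rw [← ofAdd_zsmul, zsmul_eq_mul] at this
  exact this

lemma pow_i (u : ZMod N) (a : ℤ) : X.el u 0 ^ a = X.el (a * u) 0 := by
  have := (map_zpow (X.iHom) (ofAdd u) a).symm
  rw [← ofAdd_zsmul, zsmul_eq_mul] at this
  exact this

lemma exists_w (u : ZMod N) (s : ZMod n) (hs : s ≠ 0) : ∃ w, u = (1 - X.ρ s) * w := by
  obtain ⟨i, hi⟩ := (X.unit s hs).exists_right_inv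
  exact ⟨i * u, by linear_combination (-u) * hi⟩

lemma pow_ex (u : ZMod N) (s : ZMod n) (a : ℤ) : ∃ u', X.el u s ^ a = X.el u' (a * s) := by
  by_cases hs : s = 0
  · subst hs
    exact ⟨_, by rw [X.pow_i, mul_zero]⟩
  · obtain ⟨w, rfl⟩ := X.exists_w u s hs
    exact ⟨_, X.pow_w w s a⟩

/-- the defining relations -/
def Rel (a b : Fin 3 → ℤ) (s : Fin 3 → ZMod n) (t : ZMod n) (u : Fin 3 → ZMod N) (v : ZMod N) :
    Prop :=
  (∀ j, X.el (u j) (s j) * X.el v t = X.el v t * X.el (u j) (s j)) ∧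
  (∀ j, X.el (u j) (s j) ^ a j * X.el v t ^ b j = 1) ∧
  X.el (u 0) (s 0) * X.el (u 1) (s 1) * X.el (u 2) (s 2) = 1

lemma comm_iff (u s v t) : X.el u s * X.el v t = X.el v t * X.el u s ↔
    (1 - X.ρ s) * v = (1 - X.ρ t) * u := by
  rw [X.mul, X.mul, X.el_eq]
  constructor
  · rintro ⟨h, -⟩
    linear_combination -h
  · intro h
    exact ⟨by linear_combination -h, add_comm _ _⟩

lemma prod_iff (u : Fin 3 → ZMod N) (s : Fin 3 → ZMod n) :
    X.el (u 0) (s 0) * X.el (u 1) (s 1) * X.el (u 2) (s 2) = 1 ↔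
    u 0 + X.ρ (s 0) * u 1 + X.ρ (s 0 + s 1) * u 2 = 0 ∧ s 0 + s 1 + s 2 = 0 := by
  rw [X.mul, X.mul, X.el_one]

lemma rel_SS {a b : Fin 3 → ℤ} {s t u v} (h : X.Rel a b s t u v) : SS n a b s t := by
  obtain ⟨-, h2, h3⟩ := h
  refine ⟨fun j => ?_, ((X.prod_iff u s).mp h3).2⟩
  obtain ⟨u', hu'⟩ := X.pow_ex (u j) (s j) (a j)
  obtain ⟨v', hv'⟩ := X.pow_ex v t (b j)
  have := h2 j
  rw [hu', hv', X.mul, X.el_one] at this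
  exact this.2

lemma rel_t {a b : Fin 3 → ℤ} {s t} (ht : t ≠ 0) (hS : SS n a b s t) (u v) :
    X.Rel a b s t u v ↔ ∃ w, v = (1 - X.ρ t) * w ∧ ∀ j, u j = (1 - X.ρ (s j)) * w := by
  constructor
  · rintro ⟨h1, -, -⟩
    obtain ⟨w, rfl⟩ := X.exists_w v t ht
    refine ⟨w, rfl, fun j => ?_⟩
    have := h1 j
    rw [X.comm_iff] at this
    apply (X.unit t ht).mul_left_cancel
    linear_combination -this
  · rintro ⟨w, hv, hu⟩
    refine ⟨fun j => ?_, fun j => ?_, ?_⟩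
    · rw [X.comm_iff, hv, hu]; ring
    · rw [hv, hu, X.pow_w, X.pow_w, X.mul, X.el_one]
      have h := hS.1 j
      refine ⟨?_, h⟩
      have h2 := X.ρadd (a j * s j) (b j * t)
      rw [h, X.ρ0] at h2
      linear_combination w * h2
    · rw [X.prod_iff, hu, hu, hu]
      refine ⟨?_, hS.2⟩
      have h2 := X.ρadd (s 0 + s 1) (s 2)
      have h3 := X.ρadd (s 0) (s 1)
      rw [hS.2, X.ρ0] at h2
      linear_combination w * h2 + w * h3

lemma rel_0 {a b : Fin 3 → ℤ} (u v) :
    X.Rel a b 0 0 u v ↔ SS N a b u v := by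
  unfold Rel SS
  rw [X.prod_iff]
  simp only [X.pow_i, Pi.zero_apply, X.mul, X.ρ0, X.el_one]
  simp [X.ρ0]
  intro _ _ j
  rw [add_comm]

lemma rel_s {a b : Fin 3 → ℤ} {s} (hs : s ≠ 0) (hS : S0 n a s) (u v) :
    X.Rel a b s 0 u v ↔ v = 0 ∧ (∀ j, s j = 0 → (a j : ZMod N) * u j = 0) ∧
      u 0 + X.ρ (s 0) * u 1 + X.ρ (s 0 + s 1) * u 2 = 0 := by
  have hp : ∀ j, X.el (u j) (s j) ^ a j = 1 ↔ (s j = 0 → (a j : ZMod N) * u j = 0) := by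
    intro j
    by_cases h : s j = 0
    · rw [h, X.pow_i, X.el_one]
      simp
    · obtain ⟨w, hw⟩ := X.exists_w (u j) (s j) h
      rw [hw, X.pow_w, hS.1 j, X.ρ0]
      simp [h, X.el_zero]
  constructor
  · rintro ⟨h1, h2, h3⟩
    have hv : v = 0 := by
      obtain ⟨j, hj⟩ := Function.ne_iff.mp hs
      have := h1 j
      rw [X.comm_iff, X.ρ0, sub_self, zero_mul] at this
      exact (X.unit _ hj).mul_right_eq_zero.mp this
    subst hv
    refine ⟨rfl, fun j => (hp j).mp ?_, ((X.prod_iff u s).mp h3).1⟩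
    have := h2 j
    rwa [X.el_zero, one_zpow, mul_one] at this
  · rintro ⟨rfl, h2, h3⟩
    refine ⟨fun j => ?_, fun j => ?_, (X.prod_iff u s).mpr ⟨h3, hS.2⟩⟩
    · rw [X.el_zero]; simp
    · rw [X.el_zero, one_zpow, mul_one, (hp j).mpr (h2 j)]

/-- the size of the fibre over `(s, t)` -/
noncomputable def F (a b : Fin 3 → ℤ) (q : (Fin 3 → ZMod n) × ZMod n) : ℕ :=
  Nat.card {z : (Fin 3 → ZMod N) × ZMod N // X.Rel a b q.1 q.2 z.1 z.2}

lemma F_not {a b : Fin 3 → ℤ} {s t} (h : ¬ SS n a b s t) : X.F a b (s, t) = 0 := by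
  unfold F
  have : IsEmpty {z : (Fin 3 → ZMod N) × ZMod N // X.Rel a b s t z.1 z.2} :=
    ⟨fun z => h (X.rel_SS z.2)⟩
  exact Nat.card_of_isEmpty

lemma F_t {a b : Fin 3 → ℤ} {s t} (ht : t ≠ 0) (h : SS n a b s t) : X.F a b (s, t) = N := by
  unfold F
  conv_rhs => rw [← Nat.card_zmod N]
  symm
  refine Nat.card_congr (Equiv.ofBijective
    (fun w => ⟨(fun j => (1 - X.ρ (s j)) * w, (1 - X.ρ t) * w),
      (X.rel_t ht h _ _).mpr ⟨w, rfl, fun j => rfl⟩⟩) ⟨?_, ?_⟩)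
  · intro w w' hw
    simp only [Subtype.mk.injEq, Prod.mk.injEq] at hw
    exact (X.unit t ht).mul_left_cancel hw.2
  · rintro ⟨⟨u, v⟩, hz⟩
    obtain ⟨w, hv, hu⟩ := (X.rel_t ht h _ _).mp hz
    refine ⟨w, ?_⟩
    simp only [Subtype.mk.injEq, Prod.mk.injEq]
    exact ⟨(funext hu).symm, hv.symm⟩

lemma F_0 {a b : Fin 3 → ℤ} : X.F a b (0, 0) =
    Nat.card {q : (Fin 3 → ZMod N) × ZMod N // SS N a b q.1 q.2} := by
  unfold F
  exact Nat.card_congr (Equiv.subtypeEquivRight fun z => X.rel_0 _ _)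

lemma F_s {a b : Fin 3 → ℤ} {s} (hs : s ≠ 0) (hS : S0 n a s) : X.F a b (s, 0) =
    Nat.card {u : Fin 3 → ZMod N // (∀ j, s j = 0 → (a j : ZMod N) * u j = 0) ∧
      ![1, X.ρ (s 0), X.ρ (s 0 + s 1)] 0 * u 0 + ![1, X.ρ (s 0), X.ρ (s 0 + s 1)] 1 * u 1 +
      ![1, X.ρ (s 0), X.ρ (s 0 + s 1)] 2 * u 2 = 0} := by
  unfold F
  refine Nat.card_congr ⟨fun z => ⟨z.1.1, ?_⟩, fun u => ⟨(u.1, 0), ?_⟩, ?_, fun u => rfl⟩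
  · have := (X.rel_s hs hS _ _).mp z.2
    simpa using this.2
  · apply (X.rel_s hs hS _ _).mpr
    simpa using u.2
  · rintro ⟨⟨u, v⟩, hz⟩
    have := ((X.rel_s hs hS _ _).mp hz).1
    simp only at this
    subst this
    rfl

lemma eunit (s : Fin 3 → ZMod n) (j : Fin 3) : IsUnit (![1, X.ρ (s 0), X.ρ (s 0 + s 1)] j) := by
  fin_cases j
  · exact isUnit_one
  · exact X.ρ_unit _
  · exact X.ρ_unit _

lemma F_none {a b : Fin 3 → ℤ} {s} (hs : ∀ j, s j ≠ 0) (hS : S0 n a s) :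
    X.F a b (s, 0) = N ^ 2 := by
  rw [X.F_s (fun h => hs 0 (by rw [h]; rfl)) hS]
  have := card_linFin (R := ZMod N) (fun _ => True) _ (X.eunit s) 0
  rw [Nat.card_congr (Equiv.subtypeUnivEquiv fun _ => trivial), Nat.card_zmod, ← sq] at this
  rw [← this]
  refine Nat.card_congr (Equiv.subtypeEquivRight fun u => ?_)
  simp [hs]

lemma F_one [NeZero N] {a b : Fin 3 → ℤ} {s} (j : Fin 3) (hj : s j = 0) (hs : ∀ i, i ≠ j → s i ≠ 0)
    (hS : S0 n a s) :
    X.F a b (s, 0) = Int.gcd (a j) N * N := by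
  rw [X.F_s (fun h => hs (j + 1) (by fin_cases j <;> simp) (by rw [h]; rfl)) hS]
  have := card_linFin (R := ZMod N) (fun x => (a j : ZMod N) * x = 0) _ (X.eunit s) j
  rw [card_ann, Nat.card_zmod] at this
  rw [← this]
  refine Nat.card_congr (Equiv.subtypeEquivRight fun u => ?_)
  have : (∀ j, s j = 0 → (a j : ZMod N) * u j = 0) ↔ (a j : ZMod N) * u j = 0 := by
    constructor
    · exact fun h => h j hj
    · intro h i hi
      by_cases hij : i = j
      · rw [hij]; exact h
      · exact absurd hi (hs i hij)
  rw [this]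

open Classical in
lemma F_formula [NeZero N] (a b : Fin 3 → ℤ) (s : Fin 3 → ZMod n) (t : ZMod n) :
    (X.F a b (s, t) : ℤ) =
      (if SS n a b s t then 1 else 0) * (N : ℤ)
      + (if S0 n a s ∧ t = 0 then 1 else 0) * ((N : ℤ) ^ 2 - N)
      + ∑ j, (if (S0 n a s ∧ s j = 0) ∧ t = 0 then 1 else 0) *
          ((Int.gcd (a j) N : ℤ) * N - (N : ℤ) ^ 2)
      + (if s = 0 ∧ t = 0 then 1 else 0) *
        ((Nat.card {q : (Fin 3 → ZMod N) × ZMod N // SS N a b q.1 q.2} : ℤ) - (N : ℤ) ^ 2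
          - ∑ j, ((Int.gcd (a j) N : ℤ) * N - (N : ℤ) ^ 2)) := by
  by_cases ht : t = 0
  swap
  · by_cases h : SS n a b s t
    · rw [X.F_t ht h]; simp [ht, h]
    · rw [X.F_not h]; simp [ht, h]
  subst ht
  have hiff : SS n a b s 0 ↔ S0 n a s := by simp [SS, S0]
  simp only [hiff, and_true]
  by_cases hS : S0 n a s
  swap
  · rw [X.F_not (by rwa [hiff])]
    have : s ≠ 0 := by rintro rfl; exact hS (by simp [S0])
    simp [hS, this]
  simp only [hS, true_and, if_true, one_mul]
  by_cases hs : s = 0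
  · subst hs
    rw [X.F_0]
    simp
  simp only [hs, if_false, zero_mul, add_zero]
  by_cases hn : ∀ j, s j ≠ 0
  · rw [X.F_none hn hS]
    simp [hn]
  push Not at hn
  obtain ⟨j, hj⟩ := hn
  have hs' : ∀ i, i ≠ j → s i ≠ 0 := by
    intro i hij hi
    apply hs
    have h2 := hS.2
    funext l
    fin_cases j <;> fin_cases i <;> fin_cases l <;> simp_all
  rw [X.F_one j hj hs' hS, Finset.sum_eq_single j]
  · simp [hj]
  · intro i _ hij
    simp [hs' i hij]
  · simp

lemma total [NeZero N] [NeZero n] (a b : Fin 3 → ℤ) :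
    (∑ q, X.F a b q : ℤ) =
      (Nat.card {q : (Fin 3 → ZMod n) × ZMod n // SS n a b q.1 q.2} : ℤ) * N
      + (Nat.card {s // S0 n a s} : ℤ) * ((N : ℤ) ^ 2 - N)
      + ∑ j, (Nat.gcd (Int.gcd (a (j + 1)) (a (j - 1))) n : ℤ) *
          ((Int.gcd (a j) N : ℤ) * N - (N : ℤ) ^ 2)
      + ((Nat.card {q : (Fin 3 → ZMod N) × ZMod N // SS N a b q.1 q.2} : ℤ) - (N : ℤ) ^ 2
          - ∑ j, ((Int.gcd (a j) N : ℤ) * N - (N : ℤ) ^ 2)) := by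
  classical
  have hcnt : ∀ (P : (Fin 3 → ZMod n) × ZMod n → Prop) [DecidablePred P],
      (∑ q, if P q then (1 : ℤ) else 0) = Nat.card {q // P q} := by
    intro P _
    rw [Nat.card_eq_fintype_card, Fintype.card_subtype]
    simp
  have hz : ∀ P : (Fin 3 → ZMod n) → Prop,
      Nat.card {q : (Fin 3 → ZMod n) × ZMod n // P q.1 ∧ q.2 = 0} = Nat.card {s // P s} := by
    intro P
    refine Nat.card_congr ⟨fun q => ⟨q.1.1, q.2.1⟩, fun s => ⟨(s.1, 0), s.2, rfl⟩, ?_, fun s => rfl⟩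
    rintro ⟨⟨s, t⟩, h1, h2⟩
    simp only at h2
    subst h2
    rfl
  have h : ∀ q, _ := fun q : (Fin 3 → ZMod n) × ZMod n => X.F_formula a b q.1 q.2
  simp only [Prod.mk.eta] at h
  rw [Finset.sum_congr rfl fun q _ => h q]
  rw [Finset.sum_add_distrib, Finset.sum_add_distrib, Finset.sum_add_distrib, Finset.sum_comm]
  simp only [← Finset.sum_mul]
  rw [hcnt (fun q => SS n a b q.1 q.2), hcnt (fun q => S0 n a q.1 ∧ q.2 = 0), hz (S0 n a),
    hcnt (fun q => q.1 = 0 ∧ q.2 = 0), hz (fun s => s = 0)]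
  simp_rw [fun j : Fin 3 => hcnt (fun q => (S0 n a q.1 ∧ q.1 j = 0) ∧ q.2 = 0),
    fun j : Fin 3 => hz (fun s => S0 n a s ∧ s j = 0), card_S0_zero]
  simp

lemma card_rel [NeZero N] [NeZero n] (a b : Fin 3 → ℤ) :
    Nat.card {q : (Fin 3 → G) × G // (∀ j, q.1 j * q.2 = q.2 * q.1 j) ∧
      (∀ j, q.1 j ^ a j * q.2 ^ b j = 1) ∧ q.1 0 * q.1 1 * q.1 2 = 1} = ∑ q, X.F a b q := by
  unfold F
  rw [← Nat.card_sigma]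
  symm
  refine Nat.card_congr (Equiv.ofBijective
    (fun z => ⟨(fun j => X.el (z.2.1.1 j) (z.1.1 j), X.el z.2.1.2 z.1.2), z.2.2⟩) ⟨?_, ?_⟩)
  · rintro ⟨⟨s, t⟩, ⟨⟨u, v⟩, h⟩⟩ ⟨⟨s', t'⟩, ⟨⟨u', v'⟩, h'⟩⟩ hh
    have h1 : (fun j => X.el (u j) (s j)) = fun j => X.el (u' j) (s' j) :=
      congrArg (fun z => z.1.1) hh
    have h2 : X.el v t = X.el v' t' := congrArg (fun z => z.1.2) hh
    have h3 := fun j => X.inj _ _ _ _ (congrFun h1 j)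
    obtain ⟨rfl, rfl⟩ := X.inj _ _ _ _ h2
    obtain rfl : u = u' := funext fun j => (h3 j).1
    obtain rfl : s = s' := funext fun j => (h3 j).2
    rfl
  · rintro ⟨⟨x, g⟩, h⟩
    choose u s hus using fun j => X.surj (x j)
    obtain ⟨v, t, rfl⟩ := X.surj g
    obtain rfl : (fun j => X.el (u j) (s j)) = x := funext hus
    exact ⟨⟨(s, t), ⟨(u, v), h⟩⟩, rfl⟩

end SD

lemma gcd_div_mul_lcm (n x y : ℕ) (hn : 0 < n) (hx : x ∣ n) (hy : y ∣ n) :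
    Nat.gcd (n / x) (n / y) * Nat.lcm x y = n := by
  have hg : 0 < Nat.gcd x y := Nat.gcd_pos_of_pos_left _ (Nat.pos_of_dvd_of_pos hx hn)
  apply Nat.eq_of_mul_eq_mul_left hg
  have h1 : Nat.gcd (x * y * (n / x)) (x * y * (n / y)) = x * y * Nat.gcd (n / x) (n / y) :=
    Nat.gcd_mul_left _ _ _
  have h2 : x * y * (n / x) = n * y := by
    rw [mul_right_comm, Nat.mul_div_cancel' hx]
  have h3 : x * y * (n / y) = n * x := by
    rw [mul_assoc, Nat.mul_div_cancel' hy, mul_comm]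
  rw [h2, h3, Nat.gcd_mul_left] at h1
  rw [mul_left_comm, Nat.gcd_mul_lcm, mul_comm, ← h1, Nat.gcd_comm y x, mul_comm]

lemma gcd_prime_pow (p l : ℕ) (hp : p.Prime) (x : ℤ) :
    Int.gcd x ((p ^ l : ℕ) : ℤ) = p ^ (if x = 0 then l else min l (padicValInt p x)) := by
  have := Fact.mk hp
  split_ifs with hx
  · subst hx; simp
  · obtain ⟨k, hk, hk'⟩ := (Nat.dvd_prime_pow hp).mp
      (show Int.gcd x ((p ^ l : ℕ) : ℤ) ∣ p ^ l from Nat.gcd_dvd_right _ _)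
    rw [hk']
    congr 1
    apply le_antisymm
    · apply le_min hk
      have h : ((p ^ k : ℕ) : ℤ) ∣ x := hk' ▸ Int.gcd_dvd_left _ _
      push_cast at h
      exact ((padicValInt_dvd_iff k x).mp h).resolve_left hx
    · apply (Nat.pow_dvd_pow_iff_le_right hp.one_lt).mp
      rw [← hk']
      apply Int.natCast_dvd_natCast.mp
      apply Int.dvd_coe_gcd
      · push_cast
        exact (padicValInt_dvd_iff _ x).mpr (Or.inr (min_le_right _ _))
      · exact Int.natCast_dvd_natCast.mpr (pow_dvd_pow p (min_le_left _ _))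

lemma unit_sub (p m n : ℕ) (hp : p.Prime) (hm : 1 ≤ m) (hdvd : n ∣ p - 1)
    (y : (ZMod (p ^ m))ˣ) (hy : y ^ n = 1) (hy1 : y ≠ 1) : IsUnit (1 - (y : ZMod (p ^ m))) := by
  by_contra hu
  apply hy1
  have hpm : p ^ m ≠ 0 := pow_ne_zero _ hp.ne_zero
  have : NeZero (p ^ m) := ⟨hpm⟩
  have h1 : (p : ZMod (p ^ m)) ∣ 1 - y := by
    obtain ⟨k, hk⟩ := ZMod.natCast_zmod_surjective (1 - (y : ZMod (p ^ m)))
    rw [← hk] at hu ⊢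
    rw [ZMod.isUnit_iff_coprime, Nat.coprime_pow_right_iff (by omega), Nat.coprime_comm,
      hp.coprime_iff_not_dvd, not_not] at hu
    exact_mod_cast Nat.cast_dvd_cast hu
  have h2 := dvd_sub_pow_of_dvd_sub h1 (m - 1)
  rw [Nat.sub_add_cancel hm, ← Nat.cast_pow, ZMod.natCast_self, zero_dvd_iff, one_pow] at h2
  have h3 : y ^ p ^ (m - 1) = 1 := by
    ext
    push_cast
    linear_combination -h2
  have hco : Nat.Coprime (p ^ (m - 1)) n := by
    apply Nat.Coprime.pow_left
    rw [hp.coprime_iff_not_dvd]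
    intro h
    have h4 := Nat.le_of_dvd (by have := hp.two_le; omega) (h.trans hdvd)
    have := hp.two_le
    omega
  have h5 := Nat.dvd_gcd (orderOf_dvd_of_pow_eq_one h3) (orderOf_dvd_of_pow_eq_one hy)
  rw [hco, Nat.dvd_one, orderOf_eq_one_iff] at h5
  exact h5

/-- coordinates on the semidirect product of the theorem -/
noncomputable def theSD (p m n : ℕ) (hp : p.Prime) (hm : 1 ≤ m) (hn : 0 < n) (hdvd : n ∣ p - 1)
    (r : (ZMod (p ^ m))ˣ) (hr : orderOf r = n)
    (ψ : Multiplicative (ZMod n) →* MulAut (Multiplicative (ZMod (p ^ m))))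
    (hψ : ∀ x : ZMod (p ^ m),
      ψ (ofAdd (1 : ZMod n)) (ofAdd x) = ofAdd ((r : ZMod (p ^ m)) * x)) :
    SD (p ^ m) n (Multiplicative (ZMod (p ^ m)) ⋊[ψ] Multiplicative (ZMod n)) where
  el u s := ⟨ofAdd u, ofAdd s⟩
  ρ s := ((r ^ s.val : (ZMod (p ^ m))ˣ) : ZMod (p ^ m))
  mul := by
    have : NeZero n := ⟨hn.ne'⟩
    have key : ∀ (k : ℕ) (x : ZMod (p ^ m)), (ψ (ofAdd (1 : ZMod n)) ^ k) (ofAdd x) =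
        ofAdd (((r ^ k : (ZMod (p ^ m))ˣ) : ZMod (p ^ m)) * x) := by
      intro k
      induction k with
      | zero => intro x; simp
      | succ k ih =>
        intro x
        rw [pow_succ, MulAut.mul_apply, hψ, ih, pow_succ]
        push_cast
        rw [mul_assoc]
    intro u s u' s'
    have h1 : ofAdd s = (ofAdd (1 : ZMod n)) ^ s.val := by
      rw [← ofAdd_nsmul]; simp
    have h2 : ψ (ofAdd s) (ofAdd u') =
        ofAdd (((r ^ s.val : (ZMod (p ^ m))ˣ) : ZMod (p ^ m)) * u') := by
      conv_lhs => rw [h1, map_pow]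
      exact key _ _
    apply SemidirectProduct.ext
    · rw [SemidirectProduct.mul_left]
      simp only
      rw [h2]; rfl
    · rfl
  inj := by
    intro u s u' s' h
    have h1 := congrArg SemidirectProduct.left h
    have h2 := congrArg SemidirectProduct.right h
    exact ⟨h1, h2⟩
  surj := fun g => ⟨g.left.toAdd, g.right.toAdd, rfl⟩
  ρ0 := by simp
  ρadd := by
    have : NeZero n := ⟨hn.ne'⟩
    intro s t
    rw [ZMod.val_add, ← Units.val_mul, ← pow_add]
    congr 1
    have := pow_mod_orderOf r (s.val + t.val)
    rwa [hr] at this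
  unit := by
    have : NeZero n := ⟨hn.ne'⟩
    intro s hs
    apply unit_sub p m n hp hm hdvd
    · rw [← pow_mul, mul_comm, pow_mul, orderOf_dvd_iff_pow_eq_one.mp hr.dvd, one_pow]
    · intro h
      have h1 := orderOf_dvd_of_pow_eq_one h
      rw [hr] at h1
      have h2 := Nat.eq_zero_of_dvd_of_lt h1 s.val_lt
      exact hs ((ZMod.val_eq_zero s).mp h2)

lemma card_homs_eq {G : Type} [Group G] (a b : Fin 3 → ℤ) :
    Nat.card (PresentedGroup (seifertRels a b) →* G) =
    Nat.card {q : (Fin 3 → G) × G // (∀ j, q.1 j * q.2 = q.2 * q.1 j) ∧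
      (∀ j, q.1 j ^ a j * q.2 ^ b j = 1) ∧ q.1 0 * q.1 1 * q.1 2 = 1} := by
  have hrel : ∀ φ : FreeGroup (Fin 4) →* G, (∀ x ∈ seifertRels a b, φ x = 1) ↔
      ((∀ j : Fin 3, φ (FreeGroup.of j.castSucc) * φ (FreeGroup.of 3) =
        φ (FreeGroup.of 3) * φ (FreeGroup.of j.castSucc)) ∧
      (∀ j : Fin 3, φ (FreeGroup.of j.castSucc) ^ a j * φ (FreeGroup.of 3) ^ b j = 1) ∧
      φ (FreeGroup.of 0) * φ (FreeGroup.of 1) * φ (FreeGroup.of 2) = 1) := by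
    intro φ
    constructor
    · intro h
      refine ⟨fun j => ?_, fun j => ?_, ?_⟩
      · have := h _ (Or.inl (Or.inl (Set.mem_iUnion.mpr ⟨j, rfl⟩)))
        simp only [map_mul, map_inv] at this
        rw [mul_inv_eq_one, mul_inv_eq_iff_eq_mul] at this
        exact this
      · have := h _ (Or.inl (Or.inr (Set.mem_iUnion.mpr ⟨j, rfl⟩)))
        simpa only [map_mul, map_zpow] using this
      · have := h _ (Or.inr rfl)
        simpa only [map_mul] using this
    · rintro ⟨h1, h2, h3⟩ x ((hx | hx) | hx)
      · obtain ⟨j, rfl⟩ := Set.mem_iUnion.mp hx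
        simp only [map_mul, map_inv]
        rw [mul_inv_eq_one, mul_inv_eq_iff_eq_mul]
        exact h1 j
      · obtain ⟨j, rfl⟩ := Set.mem_iUnion.mp hx
        simpa only [map_mul, map_zpow] using h2 j
      · rw [Set.mem_singleton_iff.mp hx]
        simpa only [map_mul] using h3
  refine Nat.card_congr (Equiv.ofBijective
    (fun φ => ⟨(fun j => φ (PresentedGroup.of j.castSucc), φ (PresentedGroup.of 3)), ?_⟩) ⟨?_, ?_⟩)
  · exact (hrel (φ.comp (PresentedGroup.mk _))).mp (by
      intro x hx
      have : PresentedGroup.mk (seifertRels a b) x = 1 := by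
        exact (QuotientGroup.eq_one_iff x).mpr (Subgroup.subset_normalClosure hx)
      rw [MonoidHom.comp_apply, this, map_one])
  · intro φ φ' h
    have h1 := congrArg (fun z => z.1.1) h
    have h2 := congrArg (fun z => z.1.2) h
    apply PresentedGroup.ext
    intro x
    induction x using Fin.lastCases with
    | last => exact h2
    | cast j => exact congrFun h1 j
  · rintro ⟨⟨x, g⟩, h⟩
    let F : Fin 4 → G := ![x 0, x 1, x 2, g]
    have hF : ∀ j : Fin 3, F j.castSucc = x j := by
      intro j; fin_cases j <;> rfl
    have hF3 : F 3 = g := rfl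
    have hh : ∀ y ∈ seifertRels a b, FreeGroup.lift F y = 1 := by
      apply (hrel (FreeGroup.lift F)).mpr
      simp only [FreeGroup.lift_apply_of, hF, hF3]
      exact h
    refine ⟨PresentedGroup.toGroup hh, ?_⟩
    apply Subtype.ext
    simp only [PresentedGroup.toGroup.of, hF, hF3]

/-- Theorem 3.1 of the paper.  Counting homomorphisms from the
fundamental group of the small Seifert manifold `S²(a₁/b₁, a₂/b₂, a₃/b₃)` to
`G = ℤ/p^mℤ ⋊_r ℤ/nℤ`:  with `p^f = gcd(lcm(a₁,a₂,a₃), p^m)`, `c_j·a_j ≡ gcd(a_j,p^m)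
(mod p^m)`, `B = Σ b_j c_j p^f/gcd(a_j,p^m)`, `D' = gcd(lcm(a₁,a₂,a₃), n)`,
`c'_j·a_j ≡ gcd(a_j,n) (mod n)`, `B' = Σ b_j c'_j D'/gcd(a_j,n)`,
`E = n/lcm(D', n/gcd(n,B'))`, `κ₂ = 2 - Σ gcd(a_{j+1},a_{j-1},n) + (Π gcd(a_j,n))/D'`,
`κ₁ = Σ gcd(a_j,p^m)(gcd(a_{j+1},a_{j-1},n) - 1) + (E-1)(Π gcd(a_j,n))/D'`, and
`μ = Σ‖a_j‖_p - f + min{m-f, ‖B‖_p}` if `f < m` (with `min{m-f,‖B‖_p} = m-f` when `B=0`),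
`μ = Σ min{‖a_j‖_p, m} - m` if `f = m`, the number of homomorphisms equals
`κ₂ p^{2m} + κ₁ p^m + p^μ`. -/
theorem card_homs_seifert_to_semidirect_zmod
    (a b : Fin 3 → ℤ) (ha : ∀ j, a j ≠ 0) (hab : ∀ j, Int.gcd (a j) (b j) = 1)
    (p m n : ℕ) (hp : p.Prime) (hm : 1 ≤ m) (hn : 0 < n) (hdvd : n ∣ p - 1)
    (r : (ZMod (p ^ m))ˣ) (hr : orderOf r = n)
    (ψ : Multiplicative (ZMod n) →* MulAut (Multiplicative (ZMod (p ^ m))))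
    (hψ : ∀ x : ZMod (p ^ m),
      ψ (ofAdd (1 : ZMod n)) (ofAdd x) = ofAdd ((r : ZMod (p ^ m)) * x))
    (f : ℕ) (hf : p ^ f = Nat.gcd (Int.lcm (a 0) (Int.lcm (a 1) (a 2))) (p ^ m))
    (c : Fin 3 → ℤ)
    (hc : ∀ j, c j * a j ≡ (Int.gcd (a j) ((p : ℤ) ^ m) : ℤ) [ZMOD ((p : ℤ) ^ m)])
    (B : ℤ) (hB : B = ∑ j : Fin 3, b j * c j * ((p ^ f / Int.gcd (a j) ((p : ℤ) ^ m) : ℕ) : ℤ))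
    (D' : ℕ) (hD' : D' = Nat.gcd (Int.lcm (a 0) (Int.lcm (a 1) (a 2))) n)
    (c' : Fin 3 → ℤ)
    (hc' : ∀ j, c' j * a j ≡ (Int.gcd (a j) (n : ℤ) : ℤ) [ZMOD (n : ℤ)])
    (B' : ℤ) (hB' : B' = ∑ j : Fin 3, b j * c' j * ((D' / Int.gcd (a j) (n : ℤ) : ℕ) : ℤ))
    (E : ℕ) (hE : E = n / Nat.lcm D' (n / Int.gcd (n : ℤ) B'))
    (κ₂ : ℤ)
    (hκ₂ : κ₂ = 2 - ∑ j : Fin 3, (Nat.gcd (Int.gcd (a (j + 1)) (a (j - 1))) n : ℤ)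
      + (((∏ j : Fin 3, Int.gcd (a j) (n : ℤ)) / D' : ℕ) : ℤ))
    (κ₁ : ℤ)
    (hκ₁ : κ₁ = ∑ j : Fin 3, (Int.gcd (a j) ((p : ℤ) ^ m) : ℤ) *
        ((Nat.gcd (Int.gcd (a (j + 1)) (a (j - 1))) n : ℤ) - 1)
      + ((E : ℤ) - 1) * (((∏ j : Fin 3, Int.gcd (a j) (n : ℤ)) / D' : ℕ) : ℤ))
    (μ : ℕ)
    (hμ : μ = if f < m then
        (∑ j : Fin 3, padicValInt p (a j)) - f
          + (if B = 0 then m - f else min (m - f) (padicValInt p B))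
      else (∑ j : Fin 3, min (padicValInt p (a j)) m) - m) :
    (Nat.card (PresentedGroup (seifertRels a b) →*
        (Multiplicative (ZMod (p ^ m)) ⋊[ψ] Multiplicative (ZMod n))) : ℤ)
      = κ₂ * (p : ℤ) ^ (2 * m) + κ₁ * (p : ℤ) ^ m + (p : ℤ) ^ μ := by
  have hN : p ^ m ≠ 0 := pow_ne_zero _ hp.ne_zero
  have : NeZero (p ^ m) := ⟨hN⟩
  have : NeZero n := ⟨hn.ne'⟩
  have hcast : ((p : ℤ) ^ m) = ((p ^ m : ℕ) : ℤ) := by push_cast; rfl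
  rw [card_homs_eq, (theSD p m n hp hm hn hdvd r hr ψ hψ).card_rel a b]
  push_cast
  rw [SD.total]
  rw [hcast] at hc hB hκ₁
  have hD'pos : 0 < D' := hD' ▸ Nat.gcd_pos_of_pos_right _ hn
  have hD'n : D' ∣ n := hD' ▸ Nat.gcd_dvd_right _ _
  have hS0n := card_S0 n a ha
  have hSSn := card_SS n a b ha hab c' hc' D' hD' B' hB'
  have hS0div : (∏ j : Fin 3, Int.gcd (a j) (n : ℤ)) / D' = Nat.card {s // S0 n a s} := by
    rw [← hS0n, hD']
    exact Nat.mul_div_cancel _ (hD' ▸ hD'pos)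
  have hEe : E = Int.gcd B' (n / D' : ℕ) := by
    have hG : Int.gcd (n : ℤ) B' ∣ n := Int.natCast_dvd_natCast.mp (Int.gcd_dvd_left _ _)
    have h1 := gcd_div_mul_lcm n D' (n / Int.gcd (n : ℤ) B') hn hD'n (Nat.div_dvd_of_dvd hG)
    rw [Nat.div_div_self hG hn.ne'] at h1
    have hl : 0 < Nat.lcm D' (n / Int.gcd (n : ℤ) B') := by
      apply Nat.pos_of_ne_zero
      intro h0
      rw [h0, mul_zero] at h1
      omega
    rw [hE]
    rw [Nat.div_eq_of_eq_mul_left hl h1.symm]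
    change Nat.gcd (n / D') (Nat.gcd n B'.natAbs) = Nat.gcd B'.natAbs (n / D')
    rw [← Nat.gcd_assoc, Nat.gcd_eq_left (Nat.div_dvd_of_dvd hD'n), Nat.gcd_comm]
  have hS0N := card_S0 (p ^ m) a ha
  have hSSN := card_SS (p ^ m) a b ha hab c hc (p ^ f) hf B hB
  have hfm : f ≤ m := by
    apply (Nat.pow_dvd_pow_iff_le_right hp.one_lt).mp
    rw [hf]; exact Nat.gcd_dvd_right _ _
  have hgj : ∀ j, Int.gcd (a j) ((p ^ m : ℕ) : ℤ) = p ^ min (padicValInt p (a j)) m := by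
    intro j
    rw [gcd_prime_pow p m hp, if_neg (ha j), min_comm]
  have hAB : Nat.card {q : (Fin 3 → ZMod (p ^ m)) × ZMod (p ^ m) // SS (p ^ m) a b q.1 q.2} =
      p ^ μ := by
    rw [show Nat.gcd (LL a) (p ^ m) = p ^ f from hf.symm] at hS0N
    rw [Finset.prod_congr rfl fun j _ => hgj j, Finset.prod_pow_eq_pow_sum] at hS0N
    have hfs : f ≤ ∑ j, min (padicValInt p (a j)) m := by
      apply (Nat.pow_dvd_pow_iff_le_right hp.one_lt).mp
      exact ⟨_, by rw [← hS0N, mul_comm]⟩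
    have hcard : Nat.card {s // S0 (p ^ m) a s} = p ^ ((∑ j, min (padicValInt p (a j)) m) - f) := by
      apply Nat.eq_of_mul_eq_mul_right (pow_pos hp.pos f)
      rw [hS0N, ← pow_add, Nat.sub_add_cancel hfs]
    rw [hSSN, hcard, Nat.pow_div hfm hp.pos, gcd_prime_pow p _ hp, ← pow_add, hμ]
    congr 1
    by_cases h1 : f < m
    · have hv : ∀ j, min (padicValInt p (a j)) m = padicValInt p (a j) := by
        intro j
        have h2 : Int.gcd (a j) ((p ^ m : ℕ) : ℤ) ∣ p ^ f := by
          rw [hf]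
          apply Nat.dvd_gcd
          · exact Int.natCast_dvd_natCast.mp ((Int.gcd_dvd_left _ _).trans (dvd_LL a j))
          · exact Int.natCast_dvd_natCast.mp (Int.gcd_dvd_right _ _)
        rw [hgj, Nat.pow_dvd_pow_iff_le_right hp.one_lt] at h2
        omega
      rw [if_pos h1, Finset.sum_congr rfl fun j _ => hv j]
    · obtain rfl : f = m := by omega
      simp
  rw [hSSn, hAB, hκ₂, hκ₁, hS0div, hEe]
  simp only [Fin.sum_univ_three]
  push_cast
  ring
end

section
/- Let a₁, a₂, a₃ be nonzero integers and b₁, b₂, b₃ integers with gcd(a_j, b_j) = 1 for j = 1,2,3. Let P be the group with presentation ⟨x₁, x₂, x₃, h | x_j h x_j^{−1} h^{−1} (j=1,2,3), x_j^{a_j} h^{b_j} (j=1,2,3), x₁x₂x₃⟩. Let p be a prime, h ≥ 1, let F_{p^h} be the field with p^h elements, let r ∈ F_{p^h}^× have multiplicative order n, and let G = F_{p^h} ⋊_r ℤ/nℤ. Define (indices j taken mod 3): D' = gcd(lcm(a₁,a₂,a₃), n); integers c'_j with c'_j·a_j ≡ gcd(a_j, n) (mod n); B' = Σ_{j=1}^{3}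 b_j·c'_j·D'/gcd(a_j, n); E = n / lcm(D', n/gcd(n, B')); κ₂ = 2 − Σ_{j=1}^{3} gcd(a_{j+1}, a_{j−1}, n) + (1/D')·Π_{j=1}^{3} gcd(a_j, n); κ̃₁ = Σ_{j=1}^{3} (gcd(a_{j+1}, a_{j−1}, n) − 1)·gcd(a_j, p)^h + ((E−1)/D')·Π_{j=1}^{3} gcd(a_j, n); and C = p^{−h}·Π_{j=1}^{3} gcd(a_j, p)^h if p divides a₁a₂a₃, while C = (p^h − 1) + 1 = p^h if p does not divide a₁a₂a₃ and Σ_{j=1}^{3} a_j^{−1} b_j ≡ 0 (mod p) (inverses taken mod p), and C = 1 if p does not divide a₁a₂a₃ and Σ_{j=1}^{3} a_j^{−1} b_j ≢ 0 (mod p). Then the number of group homomorphisms from P to G equals κ₂·p^{2h} + κ̃₁·p^h + C. -/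
open Multiplicative

/-- geometric-sum coefficient: `(u,k)^a = (geo (ρ k) a * u, a k)`. -/
noncomputable def geo {F : Type} [Field F] (x : Fˣ) (a : ℤ) : F :=
  open Classical in if x = 1 then (a : F) else (((x ^ a : Fˣ) : F) - 1) / ((x : F) - 1)

lemma geo_mul {F : Type} [Field F] (x : Fˣ) (a : ℤ) :
    geo x a * ((x : F) - 1) = ((x ^ a : Fˣ) : F) - 1 := by
  unfold geo
  split_ifs with hx
  · subst hx; simp
  · have : (x : F) - 1 ≠ 0 := by
      rw [sub_ne_zero]; simpa using hx
    field_simp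

lemma geo_one {F : Type} [Field F] (a : ℤ) : geo (1 : Fˣ) a = (a : F) := by simp [geo]

lemma geo_eq_zero {F : Type} [Field F] (x : Fˣ) (a : ℤ) (hx : x ≠ 1) (h : x ^ a = 1) :
    geo x a = 0 := by simp [geo, hx, h]

lemma geo_zero {F : Type} [Field F] (x : Fˣ) : geo x 0 = (0 : F) := by simp [geo]

lemma geo_succ {F : Type} [Field F] (x : Fˣ) (a : ℤ) :
    geo x (a + 1) = geo x a + ((x ^ a : Fˣ) : F) := by
  by_cases hx : x = 1
  · subst hx; simp [geo_one]
  · have : (x : F) - 1 ≠ 0 := by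
      rw [sub_ne_zero]; simpa using hx
    apply mul_right_cancel₀ this
    rw [add_mul, geo_mul, geo_mul, zpow_add_one]; push_cast; ring

/-- Equations in the `F`-coordinates. -/
def FSol {F : Type} [Field F] (a b : Fin 3 → ℤ) (x : Fin 3 → Fˣ) (y : Fˣ)
    (v : (Fin 3 → F) × F) : Prop :=
  (∀ j, v.1 j + x j * v.2 = v.2 + y * v.1 j) ∧
  (∀ j, geo (x j) (a j) * v.1 j + ((x j ^ a j : Fˣ) : F) * (geo y (b j) * v.2) = 0) ∧
  v.1 0 + x 0 * v.1 1 + x 0 * x 1 * v.1 2 = 0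

lemma FSol_card_ne {F : Type} [Field F] (a b : Fin 3 → ℤ) (x : Fin 3 → Fˣ) (y : Fˣ)
    (hy : y ≠ 1) (hxy : ∀ j, x j ^ a j * y ^ b j = 1) (hx : x 0 * x 1 * x 2 = 1) :
    Nat.card {v // FSol a b x y v} = Nat.card F := by
  have hy1 : (y : F) - 1 ≠ 0 := by
    rw [sub_ne_zero]; simpa using hy
  symm
  apply Nat.card_congr
  refine Equiv.ofBijective (fun t => ⟨(fun j => ((x j : F) - 1) * t, ((y : F) - 1) * t), ?_, ?_, ?_⟩) ⟨?_, ?_⟩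
  · intro j; ring
  · intro j
    have h1 := geo_mul (x j) (a j)
    have h2 := geo_mul y (b j)
    have h3 : ((x j ^ a j : Fˣ) : F) * ((y ^ b j : Fˣ) : F) = 1 := by
      rw [← Units.val_mul, hxy, Units.val_one]
    linear_combination t * h1 + t * ((x j ^ a j : Fˣ) : F) * h2 + t * h3
  · have h3 : (x 0 : F) * x 1 * x 2 = 1 := by
      rw [← Units.val_mul, ← Units.val_mul, hx, Units.val_one]
    linear_combination t * h3
  · intro s t hst
    have := congrArg (fun z => z.1.2) hst
    exact mul_left_cancel₀ hy1 this
  · rintro ⟨⟨u, w⟩, h1, h2, h3⟩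
    refine ⟨w / ((y : F) - 1), ?_⟩
    ext j
    · have := h1 j
      simp only at this ⊢
      field_simp
      linear_combination this
    · simp only
      field_simp

/-- number of solutions of `d v = 0`. -/
noncomputable def KK (F : Type) [Field F] (d : F) : ℕ :=
  open Classical in if d = 0 then Nat.card F else 1

lemma card_mul_zero {F : Type} [Field F] (d : F) : Nat.card {v : F // d * v = 0} = KK F d := by
  unfold KK
  split_ifs with h
  · subst h
    exact Nat.card_congr (Equiv.subtypeUnivEquiv (by simp))
  · simp [h]

lemma lin_card {F : Type} [Field F] [Finite F] (c d : Fin 3 → F) (j : Fin 3) (hc : c j ≠ 0)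
    (hd : d j = 0) :
    Nat.card {u : Fin 3 → F // (∀ i, d i * u i = 0) ∧ ∑ i, c i * u i = 0} * Nat.card F
      = ∏ i, KK F (d i) := by
  have h1 : ∏ i, KK F (d i) = Nat.card {u : Fin 3 → F // ∀ i, d i * u i = 0} := by
    rw [Nat.card_congr (Equiv.subtypePiEquivPi (p := fun i (v : F) => d i * v = 0)), Nat.card_pi]
    simp only [card_mul_zero]
  rw [h1, ← Nat.card_prod]
  have key : ∀ (u : Fin 3 → F) (t : F), ∑ i, c i * (u i + (Pi.single j (t / c j) : Fin 3 → F) i)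
      = ∑ i, c i * u i + t := by
    intro u t
    simp only [mul_add, Finset.sum_add_distrib]
    congr 1
    rw [Finset.sum_eq_single j]
    · simp; field_simp
    · intro i _ hi; simp [hi]
    · simp
  have key2 : ∀ (u : Fin 3 → F) (t : F), (∀ i, d i * u i = 0) →
      ∀ i, d i * (u i + (Pi.single j t : Fin 3 → F) i) = 0 := by
    intro u t hu i
    rcases eq_or_ne i j with rfl | hi
    · simp [hd]
    · simp [hi, hu i]
  apply Nat.card_congr
  refine ⟨fun z => ⟨fun i => z.1.1 i + (Pi.single j (z.2 / c j) : Fin 3 → F) i, key2 _ _ z.1.2.1⟩,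
    fun u => (⟨fun i => u.1 i + (Pi.single j ((-∑ i, c i * u.1 i) / c j) : Fin 3 → F) i,
      key2 _ _ u.2, by rw [key]; ring⟩, ∑ i, c i * u.1 i), ?_, ?_⟩
  · rintro ⟨⟨u, hu, hs⟩, t⟩
    have := key u t
    rw [hs, zero_add] at this
    ext i
    · simp only [this]
      simp [neg_div, Pi.single_neg]
    · simp only [this]
  · rintro ⟨u, hu⟩
    ext i
    simp [neg_div, Pi.single_neg]

lemma FSol_card_one {F : Type} [Field F] [Finite F] (a b : Fin 3 → ℤ) (x : Fin 3 → Fˣ)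
    (hx1 : ∃ j, x j ≠ 1) (hxa : ∀ j, x j ^ a j = 1) :
    Nat.card {v // FSol a b x 1 v} * Nat.card F =
      ∏ j, open Classical in if x j = 1 then KK F (a j : F) else Nat.card F := by
  obtain ⟨j, hj⟩ := hx1
  have hj1 : (x j : F) - 1 ≠ 0 := by
    rw [sub_ne_zero]; simpa using hj
  have e := lin_card (F := F) ![1, x 0, x 0 * x 1] (fun i => geo (x i) (a i)) j
    (by fin_cases j <;> simp) (geo_eq_zero _ _ hj (hxa j))
  have : (∏ j, open Classical in if x j = 1 then KK F (a j : F) else Nat.card F) =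
     ∏ i, KK F (geo (x i) (a i)) := by
    apply Finset.prod_congr rfl
    intro i _
    split_ifs with h
    · rw [h, geo_one]
    · rw [geo_eq_zero _ _ h (hxa i)]; simp [KK]
  rw [this, ← e]
  congr 1
  have hw : ∀ v : (Fin 3 → F) × F, FSol a b x 1 v → v.2 = 0 := by
    intro v hv
    have := hv.1 j
    have h2 : ((x j : F) - 1) * v.2 = 0 := by
      simp at this; linear_combination this
    exact (mul_eq_zero.1 h2).resolve_left hj1
  apply Nat.card_congr
  refine ⟨fun v => ⟨v.1.1, ?_, ?_⟩, fun u => ⟨(u.1, 0), ?_, ?_, ?_⟩, ?_, ?_⟩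
  · intro i
    have := v.2.2.1 i
    rw [hw _ v.2] at this
    simpa using this
  · have := v.2.2.2
    rw [Fin.sum_univ_three]; simpa using this
  · intro i; simp
  · intro i; simpa using u.2.1 i
  · have := u.2.2
    rw [Fin.sum_univ_three] at this; simpa using this
  · rintro ⟨⟨u, w⟩, hv⟩
    have := hw _ hv
    simp at this
    simp [this]
  · rintro ⟨u, hu⟩; rfl

lemma FSol_card_all {F : Type} [Field F] [Finite F] (a b : Fin 3 → ℤ) (p : ℕ) [CharP F p]
    (hp : p.Prime) (hab : ∀ j, Int.gcd (a j) (b j) = 1) (hdvd : (p : ℤ) ∣ a 0 * a 1 * a 2) :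
    Nat.card {v : (Fin 3 → F) × F // FSol a b 1 1 v} * Nat.card F = ∏ j, KK F (a j : F) := by
  have hj : ∃ j, (p : ℤ) ∣ a j := by
    have hpp := Nat.prime_iff_prime_int.1 hp
    rcases hpp.dvd_or_dvd hdvd with h | h
    · rcases hpp.dvd_or_dvd h with h | h
      exacts [⟨_, h⟩, ⟨_, h⟩]
    · exact ⟨_, h⟩
  obtain ⟨j, hj⟩ := hj
  have haj : (a j : F) = 0 := (CharP.intCast_eq_zero_iff F p _).2 hj
  have hbj : (b j : F) ≠ 0 := by
    intro h
    have h := (CharP.intCast_eq_zero_iff F p _).1 h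
    have := Int.dvd_coe_gcd hj h
    rw [hab] at this
    have := Int.natCast_dvd_natCast.1 this
    exact hp.one_lt.ne' (Nat.dvd_one.1 this)
  rw [← lin_card (F := F) (fun _ => 1) (fun i => (a i : F)) j (by simp) haj]
  congr 1
  have hw : ∀ v : (Fin 3 → F) × F, FSol a b 1 1 v → v.2 = 0 := by
    intro v hv
    have := hv.2.1 j
    simpa [geo_one, haj, hbj] using this
  apply Nat.card_congr
  refine ⟨fun v => ⟨v.1.1, ?_, ?_⟩, fun u => ⟨(u.1, 0), ?_, ?_, ?_⟩, ?_, ?_⟩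
  · intro i
    have := v.2.2.1 i
    rw [hw _ v.2] at this
    simpa [geo_one] using this
  · have := v.2.2.2
    rw [Fin.sum_univ_three]; simpa using this
  · intro i; simp
  · intro i; simpa [geo_one] using u.2.1 i
  · have := u.2.2
    rw [Fin.sum_univ_three] at this; simpa using this
  · rintro ⟨⟨u, w⟩, hv⟩
    have := hw _ hv
    simp at this
    simp [this]
  · rintro ⟨u, hu⟩; rfl

lemma FSol_card_all' {F : Type} [Field F] [Finite F] (a b : Fin 3 → ℤ) 
    (ha : ∀ j, (a j : F) ≠ 0) :
    Nat.card {v : (Fin 3 → F) × F // FSol a b 1 1 v} = KK F (∑ j, (a j : F)⁻¹ * b j) := by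
  rw [← card_mul_zero]
  apply Nat.card_congr
  refine ⟨fun v => ⟨v.1.2, ?_⟩, fun w => ⟨(fun j => - ((a j : F)⁻¹ * b j * w.1), w.1), ?_, ?_, ?_⟩, ?_, ?_⟩
  · obtain ⟨⟨u, w⟩, h1, h2, h3⟩ := v
    have h4 : ∀ j, (a j : F)⁻¹ * b j * w = - u j := by
      intro j
      have := h2 j
      have hj := ha j
      simp [geo_one] at this
      field_simp
      linear_combination this
    rw [Finset.sum_mul]
    simp only [h4]
    rw [Fin.sum_univ_three]
    simp at h3
    linear_combination -h3
  · intro i; simp; ring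
  · intro i
    have hj := ha i
    simp [geo_one]; field_simp; ring
  · obtain ⟨w, this⟩ := w
    rw [Fin.sum_univ_three] at this
    simp
    linear_combination -this
  · rintro ⟨⟨u, w⟩, h1, h2, h3⟩
    ext j
    · have := h2 j
      have hj := ha j
      simp [geo_one] at this ⊢
      field_simp
      linear_combination -this
    · rfl
  · rintro ⟨u, hu⟩; rfl

lemma gcd_lcm_dvd_s14 (a b n : ℕ) (ha : a ≠ 0) (hb : b ≠ 0) (hn : n ≠ 0) :
    Nat.gcd (Nat.lcm a b) n ∣ Nat.lcm (Nat.gcd a n) (Nat.gcd b n) := by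
  have h1 : Nat.lcm a b ≠ 0 := Nat.lcm_ne_zero ha hb
  have h2 : Nat.gcd a n ≠ 0 := Nat.gcd_ne_zero_right hn
  have h3 : Nat.gcd b n ≠ 0 := Nat.gcd_ne_zero_right hn
  rw [← Nat.factorization_le_iff_dvd (Nat.gcd_ne_zero_right hn) (Nat.lcm_ne_zero h2 h3),
    Nat.factorization_gcd h1 hn, Nat.factorization_lcm ha hb, Nat.factorization_lcm h2 h3,
    Nat.factorization_gcd ha hn, Nat.factorization_gcd hb hn]
  intro q
  simp only [Finsupp.inf_apply, Finsupp.sup_apply]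
  exact le_of_eq (inf_sup_right _ _ _)

lemma Dp_dvd (a : Fin 3 → ℤ) (ha : ∀ j, a j ≠ 0) (n : ℕ) (hn : n ≠ 0) (m : ℕ)
    (h : ∀ j, Int.gcd (a j) n ∣ m) :
    Nat.gcd (Int.lcm (a 0) (Int.lcm (a 1) (a 2))) n ∣ m := by
  have ha' : ∀ j, (a j).natAbs ≠ 0 := fun j => Int.natAbs_ne_zero.2 (ha j)
  have e : Int.lcm (a 0) (Int.lcm (a 1) (a 2)) =
    Nat.lcm (a 0).natAbs (Nat.lcm (a 1).natAbs (a 2).natAbs) := by simp [Int.lcm]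
  rw [e]
  refine (gcd_lcm_dvd_s14 _ _ _ (ha' 0) (Nat.lcm_ne_zero (ha' 1) (ha' 2)) hn).trans ?_
  refine Nat.lcm_dvd (h 0) ?_
  refine (gcd_lcm_dvd_s14 _ _ _ (ha' 1) (ha' 2) hn).trans ?_
  exact Nat.lcm_dvd (h 1) (h 2)

lemma dvd_lcm3 (a : Fin 3 → ℤ) (j : Fin 3) : a j ∣ (Int.lcm (a 0) (Int.lcm (a 1) (a 2)) : ℤ) := by
  have h0 := Int.dvd_lcm_left (a 0) (Int.lcm (a 1) (a 2))
  have h' := Int.dvd_lcm_right (a 0) (Int.lcm (a 1) (a 2))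
  have h1 := Int.dvd_lcm_left (a 1) (a 2)
  have h2 := Int.dvd_lcm_right (a 1) (a 2)
  fin_cases j
  exacts [h0, h1.trans h', h2.trans h']

lemma g_dvd_Dp (a : Fin 3 → ℤ) (n : ℕ) (j : Fin 3) :
    Int.gcd (a j) n ∣ Nat.gcd (Int.lcm (a 0) (Int.lcm (a 1) (a 2))) n := by
  apply Nat.dvd_gcd
  · have := (Int.gcd_dvd_left (a := a j) (b := n)).trans (dvd_lcm3 a j)
    exact Int.natCast_dvd_natCast.1 this
  · exact Int.natCast_dvd_natCast.1 (Int.gcd_dvd_right (a := a j) (b := n))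

def Ann (n : ℕ) (a : ℤ) : AddSubgroup (ZMod n) where
  carrier := {k | (a : ZMod n) * k = 0}
  zero_mem' := by simp
  add_mem' := by
    intro x y (hx : (a : ZMod n) * x = 0) (hy : (a : ZMod n) * y = 0)
    change (a : ZMod n) * (x + y) = 0
    rw [mul_add, hx, hy, add_zero]
  neg_mem' := by
    intro x (hx : (a : ZMod n) * x = 0)
    change (a : ZMod n) * (-x) = 0
    rw [mul_neg, hx, neg_zero]

lemma mem_Ann {n : ℕ} {a : ℤ} {k : ZMod n} : k ∈ Ann n a ↔ (a : ZMod n) * k = 0 := Iff.rfl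

lemma card_Ann (n : ℕ) [NeZero n] (a : ℤ) : Nat.card (Ann n a) = Int.gcd a n := by
  have h := IsAddCyclic.card_nsmulAddMonoidHom_ker (G := ZMod n) a.natAbs
  rw [Nat.card_zmod] at h
  rw [Int.gcd_comm, Int.gcd, Int.natAbs_natCast, ← h]
  congr 2
  ext k
  rw [mem_Ann]
  rcases Int.natAbs_eq a with h | h <;> rw [h] <;> simp

def sumHom (n : ℕ) (a : Fin 3 → ℤ) : ((j : Fin 3) → Ann n (a j)) →+ ZMod n where
  toFun t := ∑ j, (t j : ZMod n)
  map_zero' := by simp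
  map_add' x y := by simp [Finset.sum_add_distrib]

lemma sumHom_range (n : ℕ) [NeZero n] (a : Fin 3 → ℤ) (ha : ∀ j, a j ≠ 0) (D' : ℕ)
    (hD' : D' = Nat.gcd (Int.lcm (a 0) (Int.lcm (a 1) (a 2))) n) :
    (sumHom n a).range = Ann n D' := by
  have hn : n ≠ 0 := NeZero.ne n
  apply AddSubgroup.eq_of_le_of_card_ge
  · rintro _ ⟨t, rfl⟩
    rw [mem_Ann]
    change _ * ∑ j, (t j : ZMod n) = 0
    rw [Finset.mul_sum]
    apply Finset.sum_eq_zero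
    intro j _
    have hj : (Int.gcd (a j) n : ℤ) ∣ D' := Int.natCast_dvd_natCast.2 (hD' ▸ g_dvd_Dp a n j)
    have hg : ((Int.gcd (a j) n : ℤ) : ZMod n) * t j = 0 := by
      rw [Int.gcd_eq_gcd_ab]
      push_cast
      have := mem_Ann.1 (t j).2
      rw [ZMod.natCast_self]
      linear_combination ((a j).gcdA n : ZMod n) * this
    obtain ⟨c, hc⟩ := hj
    rw [hc]; push_cast at hg ⊢
    linear_combination (c : ZMod n) * hg
  · rw [card_Ann]
    have h1 : Int.gcd (D' : ℤ) n = D' := by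
      rw [Int.gcd_natCast_natCast]
      apply Nat.gcd_eq_left
      rw [hD']; exact Nat.gcd_dvd_right _ _
    rw [h1]
    apply Nat.le_of_dvd Nat.card_pos
    rw [hD']
    apply Dp_dvd a ha n hn
    intro j
    rw [← card_Ann]
    apply AddSubgroup.card_dvd_of_le
    intro k hk
    refine ⟨Pi.single j ⟨k, hk⟩, ?_⟩
    change ∑ i, ((Pi.single j ⟨k, hk⟩ : (j : Fin 3) → Ann n (a j)) i : ZMod n) = k
    rw [Finset.sum_eq_single j]
    · simp
    · intro i _ hi; simp [hi]
    · simp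

/-- Equations in the `ℤ/n`-coordinates. -/
def ZS (n : ℕ) (a b : Fin 3 → ℤ) : AddSubgroup ((Fin 3 → ZMod n) × ZMod n) where
  carrier := {k | (∀ j, (a j : ZMod n) * k.1 j + (b j : ZMod n) * k.2 = 0) ∧
    k.1 0 + k.1 1 + k.1 2 = 0}
  zero_mem' := by constructor <;> simp
  add_mem' := by
    rintro x y ⟨h1, h2⟩ ⟨h3, h4⟩
    refine ⟨fun j => ?_, ?_⟩
    · simp only [Prod.fst_add, Prod.snd_add, Pi.add_apply]
      linear_combination h1 j + h3 j
    · simp only [Prod.fst_add, Pi.add_apply]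
      linear_combination h2 + h4
  neg_mem' := by
    rintro x ⟨h1, h2⟩
    refine ⟨fun j => ?_, ?_⟩
    · simp only [Prod.fst_neg, Prod.snd_neg, Pi.neg_apply]
      linear_combination -h1 j
    · simp only [Prod.fst_neg, Pi.neg_apply]
      linear_combination -h2

lemma mem_ZS {n : ℕ} {a b : Fin 3 → ℤ} {k : (Fin 3 → ZMod n) × ZMod n} :
    k ∈ ZS n a b ↔ (∀ j, (a j : ZMod n) * k.1 j + (b j : ZMod n) * k.2 = 0) ∧
    k.1 0 + k.1 1 + k.1 2 = 0 := Iff.rfl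

def ZSsnd (n : ℕ) (a b : Fin 3 → ℤ) : ZS n a b →+ ZMod n :=
  (AddMonoidHom.snd _ _).comp (ZS n a b).subtype

lemma card_ker_ZSsnd (n : ℕ) [NeZero n] (a b : Fin 3 → ℤ) (ha : ∀ j, a j ≠ 0) (D' : ℕ)
    (hD' : D' = Nat.gcd (Int.lcm (a 0) (Int.lcm (a 1) (a 2))) n) :
    Nat.card (ZSsnd n a b).ker = (∏ j : Fin 3, Int.gcd (a j) (n : ℤ)) / D' := by
  have hn : n ≠ 0 := NeZero.ne n
  have hD0 : 0 < D' := by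
    rw [hD']; exact Nat.gcd_pos_of_pos_right _ (Nat.pos_of_ne_zero hn)
  have h1 := AddSubgroup.card_mul_index (sumHom n a).ker
  rw [AddSubgroup.index_ker, sumHom_range n a ha D' hD', card_Ann, Nat.card_pi] at h1
  simp only [card_Ann] at h1
  have h2 : Int.gcd (D' : ℤ) n = D' := by
    rw [Int.gcd_natCast_natCast]
    apply Nat.gcd_eq_left
    rw [hD']; exact Nat.gcd_dvd_right _ _
  rw [h2] at h1
  rw [← h1, Nat.mul_div_cancel _ hD0]
  apply Nat.card_congr
  refine ⟨fun k => ⟨fun j => ⟨k.1.1.1 j, ?_⟩, ?_⟩, fun t => ⟨⟨(fun j => t.1 j, 0), ?_, ?_⟩, ?_⟩, ?_, ?_⟩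
  · have h3 := (mem_ZS.1 k.1.2).1 j
    have h4 : k.1.1.2 = 0 := k.2
    rw [h4] at h3
    rw [mem_Ann]; simpa using h3
  · have h3 := (mem_ZS.1 k.1.2).2
    change ∑ j, k.1.1.1 j = 0
    rw [Fin.sum_univ_three]; exact h3
  · intro j
    simpa using mem_Ann.1 (t.1 j).2
  · have : ∑ j, (t.1 j : ZMod n) = 0 := t.2
    rw [Fin.sum_univ_three] at this; exact this
  · rfl
  · rintro ⟨⟨⟨k, m⟩, hk⟩, hm⟩
    have h4 : m = 0 := hm
    subst h4; rfl
  · rintro ⟨t, ht⟩; rfl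

lemma range_ZSsnd (n : ℕ) [NeZero n] (a b : Fin 3 → ℤ) (ha : ∀ j, a j ≠ 0)
    (hab : ∀ j, Int.gcd (a j) (b j) = 1) (D' : ℕ)
    (hD' : D' = Nat.gcd (Int.lcm (a 0) (Int.lcm (a 1) (a 2))) n) (c' : Fin 3 → ℤ)
    (hc' : ∀ j, c' j * a j ≡ (Int.gcd (a j) (n : ℤ) : ℤ) [ZMOD (n : ℤ)])
    (B' : ℤ) (hB' : B' = ∑ j : Fin 3, b j * c' j * ((D' / Int.gcd (a j) (n : ℤ) : ℕ) : ℤ)) :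
    (ZSsnd n a b).range =
      AddSubgroup.zmultiples ((Nat.lcm D' (n / Int.gcd (n : ℤ) B') : ℕ) : ZMod n) := by
  have hn : n ≠ 0 := NeZero.ne n
  set g : Fin 3 → ℕ := fun j => Int.gcd (a j) n with hg
  have hgD : ∀ j, g j ∣ D' := fun j => hD' ▸ g_dvd_Dp a n j
  have hcz : ∀ j, (c' j : ZMod n) * a j = (g j : ZMod n) := by
    intro j
    have := (ZMod.intCast_eq_intCast_iff _ _ n).2 (hc' j)
    push_cast at this
    exact this
  have hBz : (B' : ZMod n) = ∑ j : Fin 3, (b j : ZMod n) * c' j * ((D' / g j : ℕ) : ZMod n) := by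
    rw [hB', Int.cast_sum]; simp only [Int.cast_mul, Int.cast_natCast]; rfl
  have hDg : ∀ j, ((D' / g j : ℕ) : ZMod n) * g j = D' := by
    intro j; rw [← Nat.cast_mul, Nat.div_mul_cancel (hgD j)]
  apply le_antisymm
  · rintro _ ⟨⟨⟨k, m⟩, hk⟩, rfl⟩
    obtain ⟨h1, h2⟩ := mem_ZS.1 hk
    simp only at h1 h2
    change m ∈ _
    have hd1 : D' ∣ m.val := by
      rw [hD']
      apply Dp_dvd a ha n hn
      intro j
      have h3 := h1 j
      have hgn : ((g j : ℕ) : ℤ) ∣ n := Int.gcd_dvd_right (a := a j) (b := n)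
      have hga : ((g j : ℕ) : ℤ) ∣ a j := Int.gcd_dvd_left (a := a j) (b := n)
      have h4 : ((a j * (k j).val + b j * m.val : ℤ) : ZMod n) = 0 := by
        push_cast; rw [ZMod.natCast_zmod_val, ZMod.natCast_zmod_val]; exact h3
      rw [ZMod.intCast_zmod_eq_zero_iff_dvd] at h4
      have h5 : ((g j : ℕ) : ℤ) ∣ b j * m.val :=
        (dvd_add_right (Dvd.dvd.mul_right hga _)).1 (hgn.trans h4)
      have hcop : IsCoprime ((g j : ℕ) : ℤ) (b j) :=
        (Int.isCoprime_iff_gcd_eq_one.2 (hab j)).of_isCoprime_of_dvd_left hga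
      exact Int.natCast_dvd_natCast.1 (hcop.dvd_of_dvd_mul_left h5)
    have hd2 : n / Int.gcd (n : ℤ) B' ∣ m.val := by
      have h3 : ∀ j, (D' : ZMod n) * k j + (b j : ZMod n) * c' j * ((D' / g j : ℕ) : ZMod n) * m = 0 := by
        intro j
        rw [← hDg j, ← hcz j]
        linear_combination ((D' / g j : ℕ) : ZMod n) * c' j * h1 j
      have h4 : (B' : ZMod n) * m = 0 := by
        rw [hBz, Fin.sum_univ_three]
        linear_combination h3 0 + h3 1 + h3 2 - (D' : ZMod n) * h2
      have h5 : ((B' * m.val : ℤ) : ZMod n) = 0 := by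
        push_cast; rw [ZMod.natCast_zmod_val]; exact h4
      rw [ZMod.intCast_zmod_eq_zero_iff_dvd] at h5
      have h6 : n ∣ B'.natAbs * m.val := by
        have := Int.natAbs_dvd_natAbs.2 h5
        rw [Int.natAbs_mul] at this
        exact this
      have h7 : Int.gcd (n : ℤ) B' = Nat.gcd n B'.natAbs := rfl
      rw [h7]
      have hgp : 0 < Nat.gcd n B'.natAbs := Nat.gcd_pos_of_pos_left _ (Nat.pos_of_ne_zero hn)
      refine (Nat.coprime_div_gcd_div_gcd hgp).dvd_of_dvd_mul_left (m := B'.natAbs / Nat.gcd n B'.natAbs) ?_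
      apply Nat.dvd_of_mul_dvd_mul_left hgp
      rw [Nat.mul_div_cancel' (Nat.gcd_dvd_left _ _), ← mul_assoc,
        Nat.mul_div_cancel' (Nat.gcd_dvd_right _ _)]
      exact h6
    obtain ⟨c, hc⟩ := Nat.lcm_dvd hd1 hd2
    rw [AddSubgroup.mem_zmultiples_iff]
    refine ⟨c, ?_⟩
    rw [← ZMod.natCast_zmod_val m, hc]
    simp [mul_comm]
  · rw [AddSubgroup.zmultiples_le]
    set M := Nat.lcm D' (n / Int.gcd (n : ℤ) B') with hM
    obtain ⟨m', hm'⟩ : D' ∣ M := Nat.dvd_lcm_left _ _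
    have hMB : (B' : ZMod n) * M = 0 := by
      have : ((B' * M : ℤ) : ZMod n) = 0 := by
        rw [ZMod.intCast_zmod_eq_zero_iff_dvd]
        have h1 : ((n / Int.gcd (n : ℤ) B' : ℕ) : ℤ) ∣ M :=
          Int.natCast_dvd_natCast.2 (Nat.dvd_lcm_right _ _)
        have h2 : ((Int.gcd (n : ℤ) B' : ℕ) : ℤ) ∣ B' := Int.gcd_dvd_right _ _
        have h3 := mul_dvd_mul h2 h1
        rw [← Nat.cast_mul, Nat.mul_div_cancel'] at h3
        · exact h3
        · exact Int.natCast_dvd_natCast.1 (Int.gcd_dvd_left (a := (n : ℤ)) (b := B'))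
      simpa using this
    set k0 : Fin 3 → ZMod n := fun j => - ((b j : ZMod n) * c' j * ((D' / g j : ℕ) : ZMod n) * m') with hk0
    have hs : -(k0 0 + k0 1 + k0 2) ∈ (sumHom n a).range := by
      rw [sumHom_range n a ha D' hD', mem_Ann]
      rw [hBz, Fin.sum_univ_three, hm'] at hMB
      push_cast at hMB
      simp only [hk0]
      push_cast
      linear_combination hMB
    obtain ⟨t, ht⟩ := hs
    have ht : ∑ j, (t j : ZMod n) = -(k0 0 + k0 1 + k0 2) := ht
    rw [Fin.sum_univ_three] at ht
    refine ⟨⟨(fun j => k0 j + t j, M), ?_, ?_⟩, rfl⟩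
    · intro j
      have h1 := mem_Ann.1 (t j).2
      simp only [hk0, hm']
      push_cast
      rw [← hDg j, ← hcz j]
      linear_combination h1
    · simp only
      linear_combination ht

lemma card_ZS (n : ℕ) [NeZero n] (a b : Fin 3 → ℤ) (ha : ∀ j, a j ≠ 0)
    (hab : ∀ j, Int.gcd (a j) (b j) = 1) (D' : ℕ)
    (hD' : D' = Nat.gcd (Int.lcm (a 0) (Int.lcm (a 1) (a 2))) n) (c' : Fin 3 → ℤ)
    (hc' : ∀ j, c' j * a j ≡ (Int.gcd (a j) (n : ℤ) : ℤ) [ZMOD (n : ℤ)])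
    (B' : ℤ) (hB' : B' = ∑ j : Fin 3, b j * c' j * ((D' / Int.gcd (a j) (n : ℤ) : ℕ) : ℤ))
    (E : ℕ) (hE : E = n / Nat.lcm D' (n / Int.gcd (n : ℤ) B')) :
    Nat.card (ZS n a b) = E * ((∏ j : Fin 3, Int.gcd (a j) (n : ℤ)) / D') := by
  have hn : n ≠ 0 := NeZero.ne n
  rw [← AddSubgroup.card_mul_index (ZSsnd n a b).ker, AddSubgroup.index_ker,
    card_ker_ZSsnd n a b ha D' hD', range_ZSsnd n a b ha hab D' hD' c' hc' B' hB',
    Nat.card_zmultiples, ZMod.addOrderOf_coe _ hn, mul_comm, hE]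
  congr 2
  apply Nat.gcd_eq_right
  apply Nat.lcm_dvd
  · rw [hD']; exact Nat.gcd_dvd_right _ _
  · apply Nat.div_dvd_of_dvd
    exact Int.natCast_dvd_natCast.1 (Int.gcd_dvd_left (a := (n : ℤ)) (b := B'))

lemma card_ZS_zero (n : ℕ) [NeZero n] (a b : Fin 3 → ℤ) (j : Fin 3) :
    Nat.card {k : ZS n a b // k.1.2 = 0 ∧ k.1.1 j = 0} =
      Nat.gcd (Int.gcd (a (j + 1)) (a (j - 1))) n := by
  have h : Nat.gcd (Int.gcd (a (j + 1)) (a (j - 1))) n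
      = Nat.card (Ann n (Int.gcd (a (j + 1)) (a (j - 1)) : ℤ)) := by
    rw [card_Ann, Int.gcd_natCast_natCast]
  rw [h]
  have hA : ∀ k, k ∈ Ann n (Int.gcd (a (j + 1)) (a (j - 1)) : ℤ) ↔
      (a (j + 1) : ZMod n) * k = 0 ∧ (a (j - 1) : ZMod n) * k = 0 := by
    intro k
    rw [mem_Ann]
    constructor
    · intro hk
      obtain ⟨c, hc⟩ := Int.gcd_dvd_left (a := a (j + 1)) (b := a (j - 1))
      obtain ⟨d, hd⟩ := Int.gcd_dvd_right (a := a (j + 1)) (b := a (j - 1))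
      constructor
      · rw [hc]; push_cast at hk ⊢; linear_combination (c : ZMod n) * hk
      · rw [hd]; push_cast at hk ⊢; linear_combination (d : ZMod n) * hk
    · rintro ⟨h1, h2⟩
      rw [Int.gcd_eq_gcd_ab]
      push_cast
      linear_combination ((a (j + 1)).gcdA (a (j - 1)) : ZMod n) * h1
        + ((a (j + 1)).gcdB (a (j - 1)) : ZMod n) * h2
  apply Nat.card_congr
  have hsum : ∀ k : Fin 3 → ZMod n, k 0 + k 1 + k 2 = k j + k (j + 1) + k (j - 1) := by
    intro k
    fin_cases j
    · rfl
    · change _ = k 1 + k 2 + k 0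
      ring
    · change _ = k 2 + k 0 + k 1
      ring
  have hne1 : j + 1 ≠ j := by fin_cases j <;> decide
  have hne2 : j - 1 ≠ j := by fin_cases j <;> decide
  have hne3 : j - 1 ≠ j + 1 := by fin_cases j <;> decide
  have hall : ∀ i, i = j ∨ i = j + 1 ∨ i = j - 1 := by
    intro i; fin_cases j <;> fin_cases i <;> decide
  refine ⟨fun k => ⟨k.1.1.1 (j + 1), ?_⟩, fun k => ⟨⟨(Pi.single (j + 1) k.1 - Pi.single (j - 1) k.1, 0), ?_, ?_⟩, ?_, ?_⟩, ?_, ?_⟩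
  · obtain ⟨⟨⟨k, m⟩, h1, h2⟩, h3, h4⟩ := k
    simp only at h1 h2 h3 h4 ⊢
    rw [hA]
    have h5 := h1 (j + 1)
    have h6 := h1 (j - 1)
    rw [hsum k, h4, zero_add] at h2
    rw [h3] at h5 h6
    constructor
    · simpa using h5
    · linear_combination -h6 + (a (j - 1) : ZMod n) * h2
  · intro i
    have hk := (hA _).1 k.2
    rcases hall i with rfl | rfl | rfl
    · simp [hne1.symm, hne2.symm]
    · simp [hne3.symm, hk.1]
    · simp [hne3, hk.2]
  · rw [hsum]
    simp [hne1.symm, hne2.symm, hne3, hne3.symm]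
  · rfl
  · simp [hne1.symm, hne2.symm]
  · rintro ⟨⟨⟨k, m⟩, h1, h2⟩, h3, h4⟩
    simp only at h1 h2 h3 h4
    rw [hsum k, h4, zero_add] at h2
    ext i
    · simp only
      rcases hall i with rfl | rfl | rfl
      · simp [hne1.symm, hne2.symm, h4]
      · simp [hne3.symm]
      · simp [hne3]; linear_combination -h2
    · simp [h3]
  · rintro ⟨k, hk⟩
    simp [hne3.symm]

lemma exists_rho {F : Type} [Field F] {n : ℕ} [NeZero n] (r : Fˣ) (hr : orderOf r = n)
    (ψ : Multiplicative (ZMod n) →* MulAut (Multiplicative F))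
    (hψ : ∀ x : F, ψ (ofAdd (1 : ZMod n)) (ofAdd x) = ofAdd ((r : F) * x)) :
    ∃ ρ : Multiplicative (ZMod n) →* Fˣ, (∀ k (x : F), ψ k (ofAdd x) = ofAdd ((ρ k : F) * x)) ∧
      (∀ k, ρ k = 1 ↔ k = 1) := by
  refine ⟨⟨⟨fun k => r ^ (toAdd k).val, by simp⟩, ?_⟩, ?_, ?_⟩
  · intro k l
    simp only [toAdd_mul]
    rw [← pow_add, pow_eq_pow_iff_modEq, hr, ZMod.val_add]
    exact Nat.mod_modEq _ _
  · intro k x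
    have hpow : ∀ m : ℕ, ψ (ofAdd (1 : ZMod n) ^ m) (ofAdd x) = ofAdd (((r ^ m : Fˣ) : F) * x) := by
      intro m
      induction m with
      | zero => simp
      | succ m ih =>
        rw [pow_succ', map_mul, MulAut.mul_apply, ih, hψ, pow_succ']
        push_cast; rw [mul_assoc]
    have hk : k = ofAdd (1 : ZMod n) ^ (toAdd k).val := by
      rw [← ofAdd_nsmul]; simp
    have := hpow (toAdd k).val
    rw [← hk] at this
    exact this
  · intro k
    change r ^ (toAdd k).val = 1 ↔ _
    rw [← orderOf_dvd_iff_pow_eq_one, hr]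
    constructor
    · intro h
      have := Nat.eq_zero_of_dvd_of_lt h (ZMod.val_lt _)
      rw [ZMod.val_eq_zero] at this
      exact this
    · rintro rfl; simp

lemma sd_mul {F : Type} [Field F] {n : ℕ} 
    (ψ : Multiplicative (ZMod n) →* MulAut (Multiplicative F)) (ρ : Multiplicative (ZMod n) →* Fˣ)
    (hρ : ∀ k (x : F), ψ k (ofAdd x) = ofAdd ((ρ k : F) * x)) (u v : F)
    (k l : Multiplicative (ZMod n)) :
    (⟨ofAdd u, k⟩ : Multiplicative F ⋊[ψ] Multiplicative (ZMod n)) * ⟨ofAdd v, l⟩ =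
      ⟨ofAdd (u + ρ k * v), k * l⟩ := by
  ext
  · simp [hρ]
  · simp

lemma sd_one {F : Type} [Field F] {n : ℕ} 
    (ψ : Multiplicative (ZMod n) →* MulAut (Multiplicative F)) :
    (1 : Multiplicative F ⋊[ψ] Multiplicative (ZMod n)) = ⟨ofAdd 0, 1⟩ := rfl

lemma sd_inj {F : Type} [Field F] {n : ℕ} 
    (ψ : Multiplicative (ZMod n) →* MulAut (Multiplicative F)) (u v : F)
    (k l : Multiplicative (ZMod n)) :
    (⟨ofAdd u, k⟩ : Multiplicative F ⋊[ψ] Multiplicative (ZMod n)) = ⟨ofAdd v, l⟩ ↔ u = v ∧ k = l := by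
  rw [SemidirectProduct.ext_iff]; rfl

lemma sd_zpow {F : Type} [Field F] {n : ℕ} 
    (ψ : Multiplicative (ZMod n) →* MulAut (Multiplicative F)) (ρ : Multiplicative (ZMod n) →* Fˣ)
    (hρ : ∀ k (x : F), ψ k (ofAdd x) = ofAdd ((ρ k : F) * x)) (u : F)
    (k : Multiplicative (ZMod n)) (a : ℤ) :
    (⟨ofAdd u, k⟩ : Multiplicative F ⋊[ψ] Multiplicative (ZMod n)) ^ a =
      ⟨ofAdd (geo (ρ k) a * u), k ^ a⟩ := by
  induction a using Int.induction_on with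
  | zero => rw [zpow_zero, zpow_zero, geo_zero, zero_mul, sd_one]
  | succ i ih =>
    rw [zpow_add_one, ih, sd_mul ψ ρ hρ, zpow_add_one, geo_succ, map_zpow]
    congr 2; ring
  | pred i ih =>
    rw [zpow_sub_one, ih, mul_inv_eq_iff_eq_mul, sd_mul ψ ρ hρ, sd_inj]
    constructor
    · have := geo_succ (ρ k) (-(i : ℤ) - 1)
      rw [sub_add_cancel] at this
      rw [this, map_zpow]; ring
    · rw [← zpow_add_one, sub_add_cancel]

/-- Homs out of a presented group. -/
def homEquiv {α G : Type} [Group G] (rels : Set (FreeGroup α)) :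
    (PresentedGroup rels →* G) ≃ {f : α → G // ∀ r ∈ rels, FreeGroup.lift f r = 1} where
  toFun φ := ⟨fun x => φ (PresentedGroup.of x), by
    intro r hr
    have : FreeGroup.lift (fun x => φ (PresentedGroup.of x)) = φ.comp (PresentedGroup.mk rels) := by
      ext x; simp [PresentedGroup.of]
    rw [this, MonoidHom.comp_apply]
    have h1 : PresentedGroup.mk rels r = 1 :=
      (QuotientGroup.eq_one_iff r).2 (Subgroup.subset_normalClosure hr)
    rw [h1, map_one]⟩
  invFun f := PresentedGroup.toGroup f.2
  left_inv φ := by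
    apply PresentedGroup.ext
    intro x
    simp
  right_inv f := by
    ext x
    simp

lemma rels_iff {G : Type} [Group G] (a b : Fin 3 → ℤ) (f : Fin 4 → G) :
    (∀ r ∈ seifertRels a b, FreeGroup.lift f r = 1) ↔
      (∀ j : Fin 3, f j.castSucc * f 3 = f 3 * f j.castSucc) ∧
      (∀ j : Fin 3, f j.castSucc ^ a j * f 3 ^ b j = 1) ∧ f 0 * f 1 * f 2 = 1 := by
  unfold seifertRels
  constructor
  · intro h
    refine ⟨fun j => ?_, fun j => ?_, ?_⟩
    · have := h _ (Or.inl (Or.inl (Set.mem_iUnion.2 ⟨j, rfl⟩)))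
      simp only [map_mul, map_inv, FreeGroup.lift_apply_of] at this
      rw [mul_inv_eq_one, mul_inv_eq_iff_eq_mul] at this
      exact this
    · have := h _ (Or.inl (Or.inr (Set.mem_iUnion.2 ⟨j, rfl⟩)))
      simpa only [map_mul, map_zpow, FreeGroup.lift_apply_of] using this
    · have := h _ (Or.inr rfl)
      simpa only [map_mul, FreeGroup.lift_apply_of] using this
  · rintro ⟨h1, h2, h3⟩ r ((hr | hr) | hr)
    · obtain ⟨j, rfl⟩ := Set.mem_iUnion.1 hr
      simp only [map_mul, map_inv, FreeGroup.lift_apply_of]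
      rw [mul_inv_eq_one, mul_inv_eq_iff_eq_mul, h1]
    · obtain ⟨j, rfl⟩ := Set.mem_iUnion.1 hr
      simpa only [map_mul, map_zpow, FreeGroup.lift_apply_of] using h2 j
    · obtain rfl := hr
      simpa only [map_mul, FreeGroup.lift_apply_of] using h3

/-- coordinates -/
def coordEquiv {F : Type} [Field F] {n : ℕ} 
    (ψ : Multiplicative (ZMod n) →* MulAut (Multiplicative F)) :
    (Fin 4 → Multiplicative F ⋊[ψ] Multiplicative (ZMod n)) ≃
      ((Fin 3 → ZMod n) × ZMod n) × ((Fin 3 → F) × F) where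
  toFun f := ((fun j => toAdd (f j.castSucc).right, toAdd (f 3).right),
    (fun j => toAdd (f j.castSucc).left, toAdd (f 3).left))
  invFun z := ![⟨ofAdd (z.2.1 0), ofAdd (z.1.1 0)⟩, ⟨ofAdd (z.2.1 1), ofAdd (z.1.1 1)⟩,
    ⟨ofAdd (z.2.1 2), ofAdd (z.1.1 2)⟩, ⟨ofAdd z.2.2, ofAdd z.1.2⟩]
  left_inv f := by
    ext j
    · fin_cases j <;> rfl
    · fin_cases j <;> rfl
  right_inv z := by
    ext j
    · fin_cases j <;> rfl
    · rfl
    · fin_cases j <;> rfl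
    · rfl

lemma coord_iff {F : Type} [Field F] {n : ℕ} 
    (ψ : Multiplicative (ZMod n) →* MulAut (Multiplicative F)) (ρ : Multiplicative (ZMod n) →* Fˣ)
    (hρ : ∀ k (x : F), ψ k (ofAdd x) = ofAdd ((ρ k : F) * x)) (a b : Fin 3 → ℤ)
    (f : Fin 4 → Multiplicative F ⋊[ψ] Multiplicative (ZMod n)) :
    (∀ r ∈ seifertRels a b, FreeGroup.lift f r = 1) ↔
      (coordEquiv ψ f).1 ∈ ZS n a b ∧
      FSol a b (fun j => ρ (ofAdd ((coordEquiv ψ f).1.1 j))) (ρ (ofAdd (coordEquiv ψ f).1.2))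
        (coordEquiv ψ f).2 := by
  rw [rels_iff]
  obtain ⟨⟨⟨k, m⟩, ⟨u, w⟩⟩, rfl⟩ := (coordEquiv ψ).symm.surjective f
  rw [Equiv.apply_symm_apply]
  have e : ∀ j : Fin 3, (coordEquiv ψ).symm ((k, m), (u, w)) j.castSucc = ⟨ofAdd (u j), ofAdd (k j)⟩ := by
    intro j; fin_cases j <;> rfl
  have e0 := e 0
  have e1 := e 1
  have e2 := e 2
  have e3 : (coordEquiv ψ).symm ((k, m), (u, w)) 3 = ⟨ofAdd w, ofAdd m⟩ := rfl
  simp only [Fin.castSucc_zero, Fin.castSucc_one] at e0 e1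
  change (coordEquiv ψ).symm ((k, m), (u, w)) 2 = _ at e2
  simp only [e, e0, e1, e2, e3, sd_mul ψ ρ hρ, sd_zpow ψ ρ hρ, sd_one, sd_inj, mem_ZS, FSol]
  have hz : ∀ j, ofAdd (k j) ^ a j * ofAdd m ^ b j = 1 ↔ (a j : ZMod n) * k j + (b j : ZMod n) * m = 0 := by
    intro j
    rw [← ofAdd_zsmul, ← ofAdd_zsmul, ← ofAdd_add, ofAdd_eq_one, zsmul_eq_mul, zsmul_eq_mul]
  have hz2 : ofAdd (k 0) * ofAdd (k 1) * ofAdd (k 2) = 1 ↔ k 0 + k 1 + k 2 = 0 := by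
    rw [← ofAdd_add, ← ofAdd_add, ofAdd_eq_one]
  simp only [hz, hz2, map_mul, map_zpow, Units.val_mul, forall_and]
  constructor
  · rintro ⟨⟨h1, -⟩, ⟨h2, h3⟩, h4, h5⟩
    exact ⟨⟨h3, h5⟩, h1, h2, h4⟩
  · rintro ⟨⟨h3, h5⟩, h1, h2, h4⟩
    exact ⟨⟨h1, fun _ => mul_comm _ _⟩, ⟨h2, h3⟩, h4, h5⟩

lemma card_hom_eq_sum {a b : Fin 3 → ℤ} {F : Type} [Field F] [Finite F] {n : ℕ} [NeZero n] [Fintype (ZS n a b)]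
    (ψ : Multiplicative (ZMod n) →* MulAut (Multiplicative F)) (ρ : Multiplicative (ZMod n) →* Fˣ)
    (hρ : ∀ k (x : F), ψ k (ofAdd x) = ofAdd ((ρ k : F) * x)) :
    Nat.card (PresentedGroup (seifertRels a b) →*
        (Multiplicative F ⋊[ψ] Multiplicative (ZMod n))) =
      ∑ k : ZS n a b, Nat.card {v // FSol a b (fun j => ρ (ofAdd (k.1.1 j))) (ρ (ofAdd k.1.2)) v} := by
  rw [← Nat.card_sigma]
  refine Nat.card_congr ((homEquiv _).trans (((coordEquiv ψ).subtypeEquiv (q := fun z => z.1 ∈ ZS n a b ∧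
      FSol a b (fun j => ρ (ofAdd (z.1.1 j))) (ρ (ofAdd z.1.2)) z.2) (coord_iff ψ ρ hρ a b)).trans ?_))
  exact ⟨fun z => ⟨⟨z.1.1, z.2.1⟩, ⟨z.1.2, z.2.2⟩⟩, fun s => ⟨(s.1.1, s.2.1), s.1.2, s.2.2⟩,
    fun _ => rfl, fun _ => rfl⟩

/-- Theorem 3.3 of the paper.  Counting homomorphisms from the
fundamental group of the small Seifert manifold `S²(a₁/b₁, a₂/b₂, a₃/b₃)` to
`G = F_{p^h} ⋊_r ℤ/nℤ`:  with `D' = gcd(lcm(a₁,a₂,a₃), n)`, `c'_j·a_j ≡ gcd(a_j,n)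
(mod n)`, `B' = Σ b_j c'_j D'/gcd(a_j,n)`, `E = n/lcm(D', n/gcd(n,B'))`,
`κ₂ = 2 - Σ gcd(a_{j+1},a_{j-1},n) + (Π gcd(a_j,n))/D'`,
`κ̃₁ = Σ (gcd(a_{j+1},a_{j-1},n) - 1)·gcd(a_j,p)^h + (E-1)(Π gcd(a_j,n))/D'`, and
`C = (Π gcd(a_j,p)^h)/p^h` if `p ∣ a₁a₂a₃`, `C = p^h` if `p ∤ a₁a₂a₃` and
`Σ a_j⁻¹ b_j ≡ 0 (mod p)`, `C = 1` otherwise, the number of homomorphisms equals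
`κ₂ p^{2h} + κ̃₁ p^h + C`. -/
theorem card_homs_seifert_to_semidirect_field
    (a b : Fin 3 → ℤ) (ha : ∀ j, a j ≠ 0) (hab : ∀ j, Int.gcd (a j) (b j) = 1)
    (p h : ℕ) (hp : p.Prime) (hh : 1 ≤ h)
    (F : Type) [Field F] [Fintype F] (hF : Fintype.card F = p ^ h)
    (n : ℕ) (r : Fˣ) (hr : orderOf r = n)
    (ψ : Multiplicative (ZMod n) →* MulAut (Multiplicative F))
    (hψ : ∀ x : F, ψ (ofAdd (1 : ZMod n)) (ofAdd x) = ofAdd ((r : F) * x))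
    (D' : ℕ) (hD' : D' = Nat.gcd (Int.lcm (a 0) (Int.lcm (a 1) (a 2))) n)
    (c' : Fin 3 → ℤ)
    (hc' : ∀ j, c' j * a j ≡ (Int.gcd (a j) (n : ℤ) : ℤ) [ZMOD (n : ℤ)])
    (B' : ℤ) (hB' : B' = ∑ j : Fin 3, b j * c' j * ((D' / Int.gcd (a j) (n : ℤ) : ℕ) : ℤ))
    (E : ℕ) (hE : E = n / Nat.lcm D' (n / Int.gcd (n : ℤ) B'))
    (κ₂ : ℤ)
    (hκ₂ : κ₂ = 2 - ∑ j : Fin 3, (Nat.gcd (Int.gcd (a (j + 1)) (a (j - 1))) n : ℤ)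
      + (((∏ j : Fin 3, Int.gcd (a j) (n : ℤ)) / D' : ℕ) : ℤ))
    (κ₁' : ℤ)
    (hκ₁' : κ₁' = ∑ j : Fin 3,
        ((Nat.gcd (Int.gcd (a (j + 1)) (a (j - 1))) n : ℤ) - 1) * (Int.gcd (a j) (p : ℤ) : ℤ) ^ h
      + ((E : ℤ) - 1) * (((∏ j : Fin 3, Int.gcd (a j) (n : ℤ)) / D' : ℕ) : ℤ))
    (C : ℤ)
    (hC : C = if (p : ℤ) ∣ a 0 * a 1 * a 2 then
        (∏ j : Fin 3, (Int.gcd (a j) (p : ℤ) : ℤ) ^ h) / (p : ℤ) ^ h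
      else if (∑ j : Fin 3, ((a j : ZMod p)⁻¹ * (b j : ZMod p))) = 0 then (p : ℤ) ^ h
      else 1) :
    (Nat.card (PresentedGroup (seifertRels a b) →*
        (Multiplicative F ⋊[ψ] Multiplicative (ZMod n))) : ℤ)
      = κ₂ * (p : ℤ) ^ (2 * h) + κ₁' * (p : ℤ) ^ h + C := by
  have : NeZero n := ⟨by rw [← hr]; exact (orderOf_pos r).ne'⟩
  have : Fact p.Prime := ⟨hp⟩
  have : CharP F p := by
    apply charP_of_card_eq_prime_pow (f := h)
    exact hF
  have hcF : Nat.card F = p ^ h := by rw [Nat.card_eq_fintype_card, hF]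
  obtain ⟨ρ, hρ, hρ1⟩ := exists_rho r hr ψ hψ
  classical
  let _ : Fintype (ZS n a b) := Fintype.ofFinite _
  rw [card_hom_eq_sum ψ ρ hρ]
  obtain ⟨q, hq⟩ : ∃ q : ℤ, q = (p : ℤ) ^ h := ⟨_, rfl⟩
  have hq0 : q ≠ 0 := by rw [hq]; exact pow_ne_zero _ (by exact_mod_cast hp.ne_zero)
  have hcq : (Nat.card F : ℤ) = q := by rw [hcF, hq]; push_cast; rfl
  obtain ⟨g, hg⟩ : ∃ g : Fin 3 → ℤ, ∀ j, g j = (Int.gcd (a j) (p : ℤ) : ℤ) ^ h :=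
    ⟨fun j => (Int.gcd (a j) (p : ℤ) : ℤ) ^ h, fun _ => rfl⟩
  have hgK : ∀ j, (KK F (a j : F) : ℤ) = g j := by
    intro j
    rw [hg, KK]
    split_ifs with hz
    · have hd : (p : ℤ) ∣ a j := (CharP.intCast_eq_zero_iff F p _).1 hz
      rw [Int.gcd_eq_right (by positivity) hd, hcq, hq]
    · have hd : ¬ (p : ℤ) ∣ a j := fun hd => hz ((CharP.intCast_eq_zero_iff F p _).2 hd)
      have : Int.gcd (a j) p = 1 := by
        rw [Int.gcd_comm, ← Int.isCoprime_iff_gcd_eq_one]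
        exact (Nat.prime_iff_prime_int.1 hp).irreducible.coprime_iff_not_dvd.2 hd
      rw [this]; simp
  have hCN : (Nat.card {v : (Fin 3 → F) × F // FSol a b 1 1 v} : ℤ) = C := by
    rw [hC]
    split_ifs with h1 h2
    · have e := FSol_card_all (F := F) a b p hp hab h1
      have e' := congrArg (Nat.cast : ℕ → ℤ) e
      push_cast at e'
      simp only [hgK] at e'
      rw [hcq] at e'
      simp only [← hg]
      rw [← hq, ← e', Int.mul_ediv_cancel _ hq0]
    all_goals
      have ha0 : ∀ j, (a j : F) ≠ 0 := by
        intro j hj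
        apply h1
        have hd : (p : ℤ) ∣ a j := (CharP.intCast_eq_zero_iff F p _).1 hj
        have := hd.trans (Finset.dvd_prod_of_mem a (Finset.mem_univ j))
        rwa [Fin.prod_univ_three] at this
      rw [FSol_card_all' a b ha0]
      have hφ : ∑ j, (a j : F)⁻¹ * (b j : F) =
          ZMod.castHom (dvd_refl p) F (∑ j : Fin 3, ((a j : ZMod p)⁻¹ * (b j : ZMod p))) := by
        rw [map_sum]
        apply Finset.sum_congr rfl
        intro j _
        rw [map_mul, map_inv₀, map_intCast, map_intCast]
      rw [hφ, KK]
    · rw [h2, map_zero, if_pos rfl, hcq, hq]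
    · rw [if_neg]
      · simp
      · intro h3
        exact h2 ((ZMod.castHom (dvd_refl p) F).injective (by rw [h3, map_zero]))
  obtain ⟨X, hX⟩ : ∃ X : ℤ, X = C - q ^ 2 - ∑ j, (g j * q - q ^ 2) := ⟨_, rfl⟩
  have hN : ∀ k : ZS n a b,
      (Nat.card {v // FSol a b (fun j => ρ (ofAdd (k.1.1 j))) (ρ (ofAdd k.1.2)) v} : ℤ) =
        q + (if k.1.2 = 0 then (q ^ 2 - q) else 0)
        + (∑ j, if k.1.2 = 0 ∧ k.1.1 j = 0 then (g j * q - q ^ 2) else 0)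
        + (if k = 0 then X else 0) := by
    rintro ⟨⟨k, m⟩, hk⟩
    obtain ⟨hk1, hk2⟩ := mem_ZS.1 hk
    simp only at hk1 hk2 ⊢
    have hz : ∀ j, ofAdd (k j) ^ a j * ofAdd m ^ b j = 1 := by
      intro j
      rw [← ofAdd_zsmul, ← ofAdd_zsmul, ← ofAdd_add, ofAdd_eq_one, zsmul_eq_mul, zsmul_eq_mul]
      exact hk1 j
    have hz2 : ofAdd (k 0) * ofAdd (k 1) * ofAdd (k 2) = 1 := by
      rw [← ofAdd_add, ← ofAdd_add, ofAdd_eq_one]; exact hk2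
    have hρ0 : ∀ z : ZMod n, ρ (ofAdd z) = 1 ↔ z = 0 := by
      intro z; rw [hρ1, ofAdd_eq_one]
    have hxy : ∀ j, ρ (ofAdd (k j)) ^ a j * ρ (ofAdd m) ^ b j = 1 := by
      intro j; rw [← map_zpow ρ, ← map_zpow ρ, ← map_mul, hz, map_one]
    have hk0 : ((⟨(k, m), hk⟩ : ZS n a b) = 0) ↔ k = 0 ∧ m = 0 := by
      rw [Subtype.ext_iff]
      exact Prod.ext_iff
    simp only [hk0]
    by_cases hm : m = 0
    · subst hm
      have hρm : ρ (ofAdd (0 : ZMod n)) = 1 := (hρ0 0).2 rfl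
      rw [hρm] at hxy ⊢
      by_cases hkz : k = 0
      · subst hkz
        have : (fun j => ρ (ofAdd ((0 : Fin 3 → ZMod n) j))) = 1 := by
          funext j; exact hρm
        rw [this, hCN]
        simp [hX]
      · have hx1 : ∃ j, ρ (ofAdd (k j)) ≠ 1 := by
          by_contra hcon
          push Not at hcon
          exact hkz (funext fun j => (hρ0 _).1 (hcon j))
        have e := FSol_card_one (F := F) a b (fun j => ρ (ofAdd (k j))) hx1
          (by intro j; simpa using hxy j)
        have e' := congrArg (Nat.cast : ℕ → ℤ) e
        rw [Nat.cast_mul, Nat.cast_prod, Fin.prod_univ_three] at e'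
        simp only [hρ0] at e'
        push_cast at e'
        rw [hcq] at e'
        simp only [hgK] at e'
        apply mul_right_cancel₀ hq0
        rw [e', Fin.sum_univ_three]
        have hne : ¬ (k 0 = 0 ∧ k 1 = 0 ∧ k 2 = 0) := by
          rintro ⟨h0, h1, h2⟩
          apply hkz
          funext j
          fin_cases j
          exacts [h0, h1, h2]
        simp only [hkz, true_and, false_and, if_true, if_false]
        by_cases h0 : k 0 = 0 <;> by_cases h1 : k 1 = 0 <;> by_cases h2 : k 2 = 0 <;>
          simp only [h0, h1, h2, if_true, if_false] <;> first
          | ring1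
          | (exfalso; simp [h0, h1, h2] at hne hk2)
    · have hy : ρ (ofAdd m) ≠ 1 := fun hc => hm ((hρ0 m).1 hc)
      have hx : ρ (ofAdd (k 0)) * ρ (ofAdd (k 1)) * ρ (ofAdd (k 2)) = 1 := by
        rw [← map_mul ρ, ← map_mul ρ, hz2, map_one]
      rw [FSol_card_ne a b _ _ hy hxy hx, hcq]
      simp [hm]
  rw [Nat.cast_sum, Finset.sum_congr rfl (fun k _ => hN k)]
  rw [Finset.sum_add_distrib, Finset.sum_add_distrib, Finset.sum_add_distrib, Finset.sum_comm]
  have hcard : ∀ (P : ZS n a b → Prop) [DecidablePred P] (z : ℤ),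
      (∑ k, if P k then z else 0) = (Nat.card {k // P k} : ℤ) * z := by
    intro P _ z
    rw [← Finset.sum_filter, Finset.sum_const, nsmul_eq_mul, Nat.card_eq_fintype_card,
      Fintype.card_subtype]
  have hT : Nat.card {k : ZS n a b // k.1.2 = 0} = (∏ j : Fin 3, Int.gcd (a j) (n : ℤ)) / D' :=
    card_ker_ZSsnd n a b ha D' hD'
  have hS := card_ZS n a b ha hab D' hD' c' hc' B' hB' E hE
  simp only [hcard, card_ZS_zero, hT]
  rw [Finset.sum_const, Finset.card_univ, ← Nat.card_eq_fintype_card, hS, Nat.card_unique,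
    hX, hκ₂, hκ₁', pow_mul', ← hq]
  simp only [← hg]
  simp only [Fin.sum_univ_three, nsmul_eq_mul, Nat.cast_mul]
  ring
end
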